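/- arXiv:1608.02687 — 2 statements merged into one kernel-verified Lean document; each statement's English description precedes it below -/
import Mathlib

section
/- Let q be a prime power and n an odd integer with n > q+1 and n | q²−1. Let δ ∈ F_{q²}* \ F_q be an element of order n. Then the cyclic code C₁ = ⟨(x−δ^{−q})(x−δ^{−1})(x−δ)(x−δ^q)⟩ ⊆ F_q[x]/(x^n − 1) is an (n,6)_q MDS symbol-pair code; that is, C₁ has minimum pair-distance 6 and |C₁| = q^{n−4}. -/
open Polynomial

/-- The pair-distance between two vectors indexed by `ZMod n`,
with indices taken modulo `n`. -/
def pairDist {n : ℕ} [NeZero n] {α : Type*} [DecidableEq α] (u v : ZMod n → α) : ℕ :=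
  (Finset.univ.filter fun i : ZMod n => (u i, u (i + 1)) ≠ (v i, v (i + 1))).card

/-- A finite subset of `ZMod n` consisting of (at least one) cyclically consecutive elements. -/
def IsArc {n : ℕ} (T : Finset (ZMod n)) : Prop :=
  ∃ (a : ZMod n) (k : ℕ), 0 < k ∧ T = (Finset.range k).image fun j : ℕ => a + (j : ZMod n)

/-- `L(S)`: the minimal number of parts in a partition of `S` into nonempty sets of
cyclically consecutive elements of `ZMod n`. -/
noncomputable def cycL {n : ℕ} (S : Finset (ZMod n)) : ℕ :=
  sInf {m | ∃ P : Finset (Finset (ZMod n)), P.card = m ∧ (∀ T ∈ P, IsArc T) ∧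
    (↑P : Set (Finset (ZMod n))).PairwiseDisjoint id ∧ P.sup id = S}

/-- The polynomial `∑ i, c i * x^i` associated to a vector `c` of length `n`. -/
noncomputable def polyOf {n : ℕ} [NeZero n] {F : Type*} [Semiring F] (c : ZMod n → F) :
    Polynomial F :=
  ∑ i : ZMod n, Polynomial.C (c i) * Polynomial.X ^ i.val

/-- `d` is the minimum pair-distance of the code `Code`. -/
def IsMinPairDist {n : ℕ} [NeZero n] {α : Type*} [DecidableEq α]
    (Code : Set (ZMod n → α)) (d : ℕ) : Prop :=
  (∀ u ∈ Code, ∀ v ∈ Code, u ≠ v → d ≤ pairDist u v) ∧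
    ∃ u ∈ Code, ∃ v ∈ Code, u ≠ v ∧ pairDist u v = d

/-- The coefficient `a₀(i) = ∑_{j=0}^{⌊(i−2)/2⌋} C(i−2−j, j) b^{i−2−2j} c^{j+1}`. -/
noncomputable def aCoeff0 {F : Type*} [Field F] (b c : F) (i : ℕ) : F :=
  ∑ j ∈ Finset.range ((i - 2) / 2 + 1),
    ((i - 2 - j).choose j : F) * b ^ (i - 2 - 2 * j) * c ^ (j + 1)

/-- The coefficient `a₁(i) = ∑_{j=0}^{⌊(i−1)/2⌋} C(i−1−j, j) b^{i−1−2j} c^{j}`. -/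
noncomputable def aCoeff1 {F : Type*} [Field F] (b c : F) (i : ℕ) : F :=
  ∑ j ∈ Finset.range ((i - 1) / 2 + 1),
    ((i - 1 - j).choose j : F) * b ^ (i - 1 - 2 * j) * c ^ j

/-- Evaluation of the polynomial associated with a vector at a point of the extension. -/
noncomputable def evL (n : ℕ) [NeZero n] (F : Type*) {E : Type*} [Field F] [Field E]
    [Algebra F E] (x : E) : (ZMod n → F) →ₗ[F] E where
  toFun c := ∑ i : ZMod n, c i • x ^ i.val
  map_add' a b := by simp [add_smul, Finset.sum_add_distrib]
  map_smul' a b := by simp [Finset.smul_sum, mul_smul]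

lemma evL_apply (n : ℕ) [NeZero n] {F E : Type*} [Field F] [Field E]
    [Algebra F E] (x : E) (c : ZMod n → F) : evL n F x c = ∑ i : ZMod n, c i • x ^ i.val := rfl

lemma eval_polyOf {n : ℕ} [NeZero n] {F E : Type*} [Field F] [Field E]
    [Algebra F E] (x : E) (c : ZMod n → F) :
    ((polyOf c).map (algebraMap F E)).eval x = evL n F x c := by
  simp [polyOf, evL_apply, Polynomial.eval_finsetSum, Polynomial.map_sum, Algebra.smul_def]

lemma evL_frob {n : ℕ} [NeZero n] {F E : Type*} [Field F] [Fintype F] [Field E]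
    [Algebra F E] (x : E) (c : ZMod n → F) :
    evL n F (x ^ Fintype.card F) c = (evL n F x c) ^ Fintype.card F := by
  have h := map_sum (FiniteField.frobeniusAlgHom F E) (fun i : ZMod n => c i • x ^ i.val)
    Finset.univ
  rw [FiniteField.coe_frobeniusAlgHom] at h
  rw [evL_apply, evL_apply]
  refine Eq.trans ?_ h.symm
  refine Finset.sum_congr rfl fun i _ => ?_
  have := map_smul (FiniteField.frobeniusAlgHom F E) (c i) (x ^ i.val)
  rw [FiniteField.coe_frobeniusAlgHom] at this
  simp only at this ⊢
  rw [this, ← pow_mul, ← pow_mul, mul_comm]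

lemma mem_range_of_pow_card {F E : Type*} [Field F] [Fintype F] [Field E]
    [Algebra F E] {y : E} (hy : y ^ Fintype.card F = y) : y ∈ Set.range (algebraMap F E) := by
  classical
  have h1 : 1 < Fintype.card F := Fintype.one_lt_card
  have hne : (X ^ Fintype.card F - X : E[X]) ≠ 0 := FiniteField.X_pow_card_sub_X_ne_zero E h1
  have hsub : Finset.univ.image (algebraMap F E) ⊆ (X ^ Fintype.card F - X : E[X]).roots.toFinset := by
    intro z hz
    obtain ⟨a, -, rfl⟩ := Finset.mem_image.1 hz
    rw [Multiset.mem_toFinset, mem_roots hne]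
    simp [IsRoot, ← map_pow, FiniteField.pow_card]
  have heq := Finset.eq_of_subset_of_card_le hsub (by
    rw [Finset.card_image_of_injective _ (algebraMap F E).injective, Finset.card_univ]
    refine (Multiset.toFinset_card_le _).trans ((card_roots' _).trans ?_)
    rw [FiniteField.X_pow_card_sub_X_natDegree_eq E h1])
  have : y ∈ (X ^ Fintype.card F - X : E[X]).roots.toFinset := by
    rw [Multiset.mem_toFinset, mem_roots hne]
    simp [IsRoot, hy]
  rw [← heq] at this
  obtain ⟨a, -, rfl⟩ := Finset.mem_image.1 this
  exact ⟨a, rfl⟩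

lemma pow_val_add {n : ℕ} [NeZero n] {E : Type*} [Field E] {x : E} (hx : x ^ n = 1)
    (i j : ZMod n) : x ^ (i + j).val = x ^ i.val * x ^ j.val := by
  rw [ZMod.val_add, ← pow_add, ← pow_eq_pow_mod _ hx]

lemma pow_val_nat {n : ℕ} [NeZero n] {E : Type*} [Field E] {x : E} (hx : x ^ n = 1)
    (j : ℕ) : x ^ (j : ZMod n).val = x ^ j := by
  rw [ZMod.val_natCast, ← pow_eq_pow_mod _ hx]

/-- a short polynomial with four roots vanishes -/
lemma four_roots {F E : Type*} [Field F] [Field E] [Algebra F E] (r : Fin 4 → E)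
    (hr : Function.Injective r) (a : Fin 4 → F)
    (h : ∀ k, ∑ j : Fin 4, a j • r k ^ (j : ℕ) = 0) : a = 0 := by
  have := Matrix.eq_zero_of_forall_index_sum_mul_pow_eq_zero (v := fun j => algebraMap F E (a j))
    hr (by simpa [Algebra.smul_def] using h)
  funext j
  have := congrFun this j
  simpa using this

set_option maxHeartbeats 2000000 in
/-- the combinatorial classification of supports of pair-weight at most five -/
lemma support_cases {n : ℕ} [NeZero n] (hn : 7 ≤ n) (S : Finset (ZMod n))
    (P : Finset (ZMod n)) (hP : ∀ i, i ∈ P ↔ (i ∈ S ∨ i + 1 ∈ S)) (hS : S.Nonempty)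
    (hc : P.card ≤ 5) :
    (∃ m, ∀ k ∈ S, k = m ∨ k = m + 1 ∨ k = m + 2 ∨ k = m + 3) ∨
    (∃ m j, j ≠ m ∧ j ≠ m + 1 ∧ ∀ k ∈ S, k = m ∨ k = m + 1 ∨ k = j) := by
  have hcast : ∀ t : ℕ, 0 < t → t < 7 → (t : ZMod n) ≠ 0 := by
    intro t h0 h7 h
    rw [ZMod.natCast_eq_zero_iff] at h
    have := Nat.le_of_dvd h0 h
    omega
  have h1 : (1 : ZMod n) ≠ 0 := by simpa using hcast 1 (by norm_num) (by norm_num)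
  have h2 : (2 : ZMod n) ≠ 0 := by simpa using hcast 2 (by norm_num) (by norm_num)
  have h3 : (3 : ZMod n) ≠ 0 := by simpa using hcast 3 (by norm_num) (by norm_num)
  have h4 : (4 : ZMod n) ≠ 0 := by simpa using hcast 4 (by norm_num) (by norm_num)
  have h6 : ∀ a b c d e f, a ∈ P → b ∈ P → c ∈ P → d ∈ P → e ∈ P → f ∈ P →
      [a, b, c, d, e, f].Nodup → False := by
    intro a b c d e f ha hb hc' hd he hf hnd
    have : [a, b, c, d, e, f].toFinset ⊆ P := by
      intro z hz
      simp only [List.mem_toFinset, List.mem_cons, List.not_mem_nil, or_false] at hz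
      rcases hz with rfl | rfl | rfl | rfl | rfl | rfl <;> assumption
    have h := Finset.card_le_card this
    rw [List.toFinset_card_of_nodup hnd] at h
    simp at h
    omega
  -- a starting point of a run
  obtain ⟨m, hm, hm'⟩ : ∃ m, m ∈ S ∧ m - 1 ∉ S := by
    by_contra! hcon
    obtain ⟨s, hs⟩ := hS
    have hall : ∀ t : ℕ, s - t ∈ S := by
      intro t
      induction t with
      | zero => simpa using hs
      | succ t ih =>
        have := hcon _ ih
        have e : s - ((t + 1 : ℕ) : ZMod n) = s - t - 1 := by push_cast; ring
        rwa [e]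
    have huniv : P = Finset.univ := by
      refine Finset.eq_univ_of_forall fun i => (hP i).2 (Or.inl ?_)
      have := hall (s - i).val
      rw [ZMod.natCast_zmod_val] at this
      simpa using this
    rw [huniv, Finset.card_univ, ZMod.card] at hc
    omega
  have hSP : ∀ k ∈ S, k ∈ P := fun k hk => (hP k).2 (Or.inl hk)
  have hSP' : ∀ k ∈ S, k - 1 ∈ P := fun k hk => (hP _).2 (Or.inr (by simpa using hk))
  by_cases hw : ∀ k ∈ S, k = m ∨ k = m + 1 ∨ k = m + 2 ∨ k = m + 3
  · exact Or.inl ⟨m, hw⟩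
  right
  push Not at hw
  obtain ⟨j, hj, hj0, hj1, hj2, hj3⟩ := hw
  have hjm : j ≠ m - 1 := fun h => hm' (h ▸ hj)
  have key : ∀ k ∈ S, k = m ∨ k = j ∨ k = m + 1 ∨ k = j - 1 ∨ k = j + 1 := by
    intro k hk
    by_contra! hcon
    obtain ⟨k1, k2, k3, k4, k5⟩ := hcon
    have hkm : k ≠ m - 1 := fun h => hm' (h ▸ hk)
    refine h6 (m - 1) m (j - 1) j (k - 1) k (hSP' _ hm) (hSP _ hm) (hSP' _ hj) (hSP _ hj)
      (hSP' _ hk) (hSP _ hk) ?_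
    simp only [List.nodup_cons, List.mem_cons, List.not_mem_nil, or_false, not_or,
      not_false_eq_true, List.nodup_nil, and_true]
    clear h6 hP hSP hSP' hcast hS hc
    refine ⟨⟨?_, ?_, ?_, ?_, ?_⟩, ⟨?_, ?_, ?_, ?_⟩, ⟨?_, ?_, ?_⟩, ⟨?_, ?_⟩, ?_⟩ <;> intro h <;>
      first
      | exact h1 (by linear_combination h)
      | exact h1 (by linear_combination -h)
      | exact h2 (by linear_combination h)
      | exact h2 (by linear_combination -h)
      | exact h3 (by linear_combination h)
      | exact h3 (by linear_combination -h)
      | exact h4 (by linear_combination h)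
      | exact h4 (by linear_combination -h)
      | grind
  by_cases ha : m + 1 ∈ S
  · refine ⟨m, j, hj0, hj1, fun k hk => ?_⟩
    rcases key k hk with h | h | h | h | h
    · exact Or.inl h
    · exact Or.inr (Or.inr h)
    · exact Or.inr (Or.inl h)
    · exfalso
      subst h
      refine h6 (m - 1) m (j - 1) j (m + 1) (j - 1 - 1) (hSP' _ hm) (hSP _ hm) (hSP' _ hj)
        (hSP _ hj) (hSP _ ha) (hSP' _ hk) ?_
      simp only [List.nodup_cons, List.mem_cons, List.not_mem_nil, or_false, not_or,
        not_false_eq_true, List.nodup_nil, and_true]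
      clear h6 hP hSP hSP' hcast hS hc key
      refine ⟨⟨?_, ?_, ?_, ?_, ?_⟩, ⟨?_, ?_, ?_, ?_⟩, ⟨?_, ?_, ?_⟩, ⟨?_, ?_⟩, ?_⟩ <;> intro h <;>
        first
        | exact h1 (by linear_combination h)
        | exact h1 (by linear_combination -h)
        | exact h2 (by linear_combination h)
        | exact h2 (by linear_combination -h)
        | exact h3 (by linear_combination h)
        | exact h3 (by linear_combination -h)
        | exact h4 (by linear_combination h)
        | exact h4 (by linear_combination -h)
        | grind
    · exfalso
      subst h
      refine h6 (m - 1) m (j - 1) j (m + 1) (j + 1) (hSP' _ hm) (hSP _ hm) (hSP' _ hj)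
        (hSP _ hj) (hSP _ ha) (hSP _ hk) ?_
      simp only [List.nodup_cons, List.mem_cons, List.not_mem_nil, or_false, not_or,
        not_false_eq_true, List.nodup_nil, and_true]
      clear h6 hP hSP hSP' hcast hS hc key
      refine ⟨⟨?_, ?_, ?_, ?_, ?_⟩, ⟨?_, ?_, ?_, ?_⟩, ⟨?_, ?_, ?_⟩, ⟨?_, ?_⟩, ?_⟩ <;> intro h <;>
        first
        | exact h1 (by linear_combination h)
        | exact h1 (by linear_combination -h)
        | exact h2 (by linear_combination h)
        | exact h2 (by linear_combination -h)
        | exact h3 (by linear_combination h)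
        | exact h3 (by linear_combination -h)
        | exact h4 (by linear_combination h)
        | exact h4 (by linear_combination -h)
        | grind
  by_cases hb : j - 1 ∈ S
  · refine ⟨j - 1, m, by grind, by grind, fun k hk => ?_⟩
    rcases key k hk with h | h | h | h | h
    · exact Or.inr (Or.inr h)
    · right; left; rw [h]; ring
    · exact absurd (h ▸ hk) ha
    · exact Or.inl h
    · exfalso
      subst h
      refine h6 (m - 1) m (j - 1) j (j - 1 - 1) (j + 1) (hSP' _ hm) (hSP _ hm) (hSP' _ hj)
        (hSP _ hj) (hSP' _ hb) (hSP _ hk) ?_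
      simp only [List.nodup_cons, List.mem_cons, List.not_mem_nil, or_false, not_or,
        not_false_eq_true, List.nodup_nil, and_true]
      clear h6 hP hSP hSP' hcast hS hc key
      refine ⟨⟨?_, ?_, ?_, ?_, ?_⟩, ⟨?_, ?_, ?_, ?_⟩, ⟨?_, ?_, ?_⟩, ⟨?_, ?_⟩, ?_⟩ <;> intro h <;>
        first
        | exact h1 (by linear_combination h)
        | exact h1 (by linear_combination -h)
        | exact h2 (by linear_combination h)
        | exact h2 (by linear_combination -h)
        | exact h3 (by linear_combination h)
        | exact h3 (by linear_combination -h)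
        | exact h4 (by linear_combination h)
        | exact h4 (by linear_combination -h)
        | grind
  · refine ⟨j, m, hj0.symm, by grind, fun k hk => ?_⟩
    rcases key k hk with h | h | h | h | h
    · exact Or.inr (Or.inr h)
    · exact Or.inl h
    · exact absurd (h ▸ hk) ha
    · exact absurd (h ▸ hk) hb
    · exact Or.inr (Or.inl h)

lemma evL_window {n : ℕ} [NeZero n] {F E : Type*} [Field F] [Field E] [Algebra F E]
    {x : E} (hx : x ^ n = 1) (k : ℕ) (hk : k ≤ n) (m : ZMod n) (c : ZMod n → F)
    (hc : ∀ i, (∀ j : ℕ, j < k → i ≠ m + j) → c i = 0) :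
    evL n F x c = x ^ m.val * ∑ j : Fin k, c (m + ((j : ℕ) : ZMod n)) • x ^ (j : ℕ) := by
  rw [evL_apply, Finset.mul_sum]
  symm
  refine Fintype.sum_of_injective (fun j : Fin k => m + ((j : ℕ) : ZMod n)) ?_ _ _ ?_ ?_
  · intro a b hab
    have h := add_left_cancel hab
    have h' := congrArg ZMod.val h
    rw [ZMod.val_natCast_of_lt (by omega), ZMod.val_natCast_of_lt (by omega)] at h'
    exact Fin.ext h'
  · intro i hi
    rw [hc i (fun j hj h => hi ⟨⟨j, hj⟩, h.symm⟩), zero_smul]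
  · intro i
    rw [pow_val_add hx, pow_val_nat hx, mul_smul_comm]

lemma evL_three {n : ℕ} [NeZero n] {F E : Type*} [Field F] [Field E] [Algebra F E]
    {x : E} (hx : x ^ n = 1) (m j : ZMod n) (hm : m ≠ m + 1) (h0 : j ≠ m) (h1 : j ≠ m + 1)
    (c : ZMod n → F) (hc : ∀ i, i ≠ m → i ≠ m + 1 → i ≠ j → c i = 0) :
    evL n F x c = x ^ m.val * (c m • 1 + c (m + 1) • x + c j • x ^ (j - m).val) := by
  have e : ∀ y : ZMod n, x ^ (m + y).val = x ^ m.val * x ^ y.val := pow_val_add hx m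
  have e1 := pow_val_nat hx 1
  rw [Nat.cast_one, pow_one] at e1
  have ej := e (j - m)
  rw [add_sub_cancel] at ej
  have : evL n F x c = ∑ i ∈ {m, m + 1, j}, c i • x ^ i.val := by
    rw [evL_apply]
    symm
    refine Finset.sum_subset (Finset.subset_univ _) fun i _ hi => ?_
    simp only [Finset.mem_insert, Finset.mem_singleton, not_or] at hi
    rw [hc i hi.1 hi.2.1 hi.2.2, zero_smul]
  rw [this, Finset.sum_insert (by simp [hm, h0.symm]), Finset.sum_insert (by simp [h1.symm]),
    Finset.sum_singleton, e, e1, ej]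
  simp only [Algebra.smul_def]
  ring

/-- no trinomial has the required roots -/
lemma trinomial {F E : Type*} [Field F] [Field E] [Algebra F E] {δ : E} (h0 : δ ≠ 0)
    (hF : δ ∉ Set.range (algebraMap F E)) (hF' : δ + δ⁻¹ ∉ Set.range (algebraMap F E))
    (t : ℕ) (ht : (δ ^ t) ^ 2 ≠ 1) (ht1 : (δ ^ t) ^ 2 ≠ δ ^ 2) (a b c : F)
    (e1 : a • (1 : E) + b • δ + c • δ ^ t = 0)
    (e2 : a • (1 : E) + b • δ⁻¹ + c • δ⁻¹ ^ t = 0) : a = 0 ∧ b = 0 ∧ c = 0 := by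
  simp only [Algebra.smul_def, mul_one] at e1 e2
  set f := algebraMap F E with hf
  have fz : ∀ z, f z = 0 → z = 0 := fun z hz => by simpa [hf] using hz
  have hy0 : δ ^ t ≠ 0 := pow_ne_zero _ h0
  rw [inv_pow] at e2
  generalize δ ^ t = y at *
  have prod : f c ^ 2 = (f a + f b * δ) * (f a + f b * δ⁻¹) := by
    have u1 : f a + f b * δ = - (f c * y) := by linear_combination e1
    have u2 : f a + f b * δ⁻¹ = - (f c * y⁻¹) := by linear_combination e2
    rw [u1, u2]; field_simp
  have hab : a * b = 0 := by
    by_contra hne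
    apply hF'
    refine ⟨(c ^ 2 - a ^ 2 - b ^ 2) / (a * b), ?_⟩
    have hfab : f a * f b ≠ 0 := by
      rw [← map_mul]; exact fun h => hne (fz _ h)
    change f _ = _
    rw [map_div₀, map_mul, div_eq_iff hfab]
    simp only [map_sub, map_pow]
    rw [prod]
    field_simp
    ring
  rcases mul_eq_zero.1 hab with h | h
  · subst h
    simp only [map_zero, zero_add] at *
    by_cases hc : c = 0
    · subst hc
      simp [h0] at e1
      exact ⟨by trivial, by simpa [hf] using e1, by trivial⟩
    · exfalso
      have hfc : f c ≠ 0 := fun h => hc (fz _ h)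
      apply ht1
      have p : f c ^ 2 = f b ^ 2 := by rw [prod]; field_simp
      have : f c ^ 2 * y ^ 2 = f c ^ 2 * δ ^ 2 := by
        nth_rw 2 [p]
        linear_combination (f c * y - f b * δ) * e1
      exact mul_left_cancel₀ (pow_ne_zero 2 hfc) this
  · subst h
    simp only [map_zero, zero_mul, add_zero] at *
    by_cases hc : c = 0
    · subst hc
      simp at e1
      exact ⟨by simpa [hf] using e1, by trivial, by trivial⟩
    · exfalso
      have hfc : f c ≠ 0 := fun h => hc (fz _ h)
      apply ht
      have : f c ^ 2 * y ^ 2 = f c ^ 2 * 1 := by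
        nth_rw 2 [prod]
        linear_combination (f c * y - f a) * e1
      exact mul_left_cancel₀ (pow_ne_zero 2 hfc) this

/-- for a prime power `q` and an odd `n` with `n > q+1`, `n | q²−1`,
and `δ ∈ F_{q²}* \ F_q` of order `n`, the cyclic code
`⟨(x−δ^{−q})(x−δ^{−1})(x−δ)(x−δ^q)⟩ ⊆ F_q[x]/(x^n−1)` is an `(n,6)_q` MDS symbol-pair
code: it has minimum pair-distance `6` and exactly `q^{n−4}` codewords. -/
theorem stmt10 {q n : ℕ} [NeZero n] {F E : Type*} [Field F] [Fintype F] [DecidableEq F]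
    [Field E] [Fintype E] [Algebra F E]
    (hq : Fintype.card F = q) (hE : Fintype.card E = q ^ 2)
    (hodd : Odd n) (hn : q + 1 < n) (hdvd : n ∣ q ^ 2 - 1)
    {δ : E} (hδ0 : δ ≠ 0) (hδF : δ ∉ Set.range (algebraMap F E)) (hδ : orderOf δ = n)
    (Code : Set (ZMod n → F))
    (hCode : Code = {c : ZMod n → F |
      ((X - C (δ⁻¹ ^ q)) * (X - C δ⁻¹) * (X - C δ) * (X - C (δ ^ q))) ∣
        (polyOf c).map (algebraMap F E)}) :
    IsMinPairDist Code 6 ∧ Nat.card Code = q ^ (n - 4) := by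
  have hq1 : 1 < q := hq ▸ Fintype.one_lt_card
  have hn7 : 7 ≤ n := by
    by_contra hlt
    push Not at hlt
    have hq5 : q < 5 := by omega
    interval_cases n <;> interval_cases q <;> first | omega | (revert hodd; decide)
  have hpow : ∀ t : ℕ, δ ^ t = 1 ↔ n ∣ t := fun t => by
    rw [← hδ]; exact orderOf_dvd_iff_pow_eq_one.symm
  have hδn : δ ^ n = 1 := (hpow n).2 dvd_rfl
  have hin : δ⁻¹ ^ n = 1 := by rw [inv_pow, hδn, inv_one]
  have hcop2 : Nat.Coprime n 2 := (Nat.coprime_two_right).2 hodd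
  have hcopq : Nat.Coprime n q := by
    have h1 : 1 ≤ q ^ 2 := Nat.one_le_pow _ _ (by omega)
    have : Nat.Coprime (q ^ 2 - 1) (q ^ 2) := by
      have := Nat.coprime_self_add_right (m := q ^ 2 - 1) (n := 1)
      rw [Nat.sub_add_cancel h1] at this
      simpa using this
    exact Nat.Coprime.coprime_dvd_left hdvd (this.coprime_dvd_right (dvd_pow_self q (by norm_num)))
  -- distinctness of the roots
  have d1 : δ ^ q ≠ δ := fun h => hδF (mem_range_of_pow_card (by rw [hq]; exact h))
  have d2 : δ * δ ≠ 1 := fun h => by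
    have := Nat.le_of_dvd (by norm_num) ((hpow 2).1 (by rw [pow_two]; exact h))
    omega
  have d3 : δ ^ q * δ ≠ 1 := fun h => by
    have := Nat.le_of_dvd (by omega) ((hpow (q + 1)).1 (by rw [pow_succ]; exact h))
    omega
  have d4 : δ ^ q * δ ^ q ≠ 1 := fun h => by
    have h2 := (hpow (q + q)).1 (by rw [pow_add]; exact h)
    have h3 : n ∣ q * 2 := by rwa [mul_two]
    have := Nat.le_of_dvd (by norm_num) (hcopq.dvd_of_dvd_mul_left h3)
    omega
  have hδq0 : δ ^ q ≠ 0 := pow_ne_zero _ hδ0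
  have r01 : δ⁻¹ ^ q ≠ δ⁻¹ := fun h => d1 (by rwa [inv_pow, inv_inj] at h)
  have r02 : δ⁻¹ ^ q ≠ δ := fun h => d3 (by
    rw [inv_pow] at h; rw [← h]; exact (by rw [h] : _ = δ ^ q * (δ ^ q)⁻¹).trans (mul_inv_cancel₀ hδq0))
  have r03 : δ⁻¹ ^ q ≠ δ ^ q := fun h => d4 (by
    rw [inv_pow] at h; nth_rw 2 [← h]; exact mul_inv_cancel₀ hδq0)
  have r12 : δ⁻¹ ≠ δ := fun h => d2 (by nth_rw 2 [← h]; exact mul_inv_cancel₀ hδ0)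
  have r13 : δ⁻¹ ≠ δ ^ q := fun h => d3 (by rw [← h]; exact inv_mul_cancel₀ hδ0)
  have r23 : δ ≠ δ ^ q := d1.symm
  have hinj : Function.Injective ![δ⁻¹ ^ q, δ⁻¹, δ, δ ^ q] := by
    intro a b hab
    fin_cases a <;> fin_cases b <;> first
      | rfl
      | exact absurd hab r01
      | exact absurd hab.symm r01
      | exact absurd hab r02
      | exact absurd hab.symm r02
      | exact absurd hab r03
      | exact absurd hab.symm r03
      | exact absurd hab r12
      | exact absurd hab.symm r12
      | exact absurd hab r13
      | exact absurd hab.symm r13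
      | exact absurd hab r23
      | exact absurd hab.symm r23
  have hF' : δ + δ⁻¹ ∉ Set.range (algebraMap F E) := by
    rintro ⟨z, hz⟩
    have h1 : (δ + δ⁻¹) ^ q = δ + δ⁻¹ := by
      rw [← hz, ← map_pow, ← hq, FiniteField.pow_card]
    have h2 : (δ + δ⁻¹) ^ q = δ ^ q + δ⁻¹ ^ q := by
      have := map_add (FiniteField.frobeniusAlgHom F E) δ δ⁻¹
      rw [FiniteField.coe_frobeniusAlgHom, hq] at this
      exact this
    have h3 : (δ ^ q - δ) * (δ ^ q * δ - 1) = 0 := by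
      have h4 : δ ^ q + (δ ^ q)⁻¹ = δ + δ⁻¹ := by rw [← inv_pow, ← h2, h1]
      generalize δ ^ q = y at *
      field_simp at h4
      linear_combination h4
    rcases mul_eq_zero.1 h3 with h | h
    · exact d1 (sub_eq_zero.1 h)
    · exact d3 (sub_eq_zero.1 h)
  -- membership in the code
  have hmem : ∀ c, c ∈ Code ↔ evL n F δ c = 0 ∧ evL n F δ⁻¹ c = 0 := by
    intro c
    rw [hCode, Set.mem_ofPred_eq]
    have hr : ∀ x : E, (X - C x) ∣ (polyOf c).map (algebraMap F E) ↔ evL n F x c = 0 := by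
      intro x
      rw [dvd_iff_isRoot, IsRoot, eval_polyOf]
    constructor
    · intro h
      exact ⟨(hr _).1 ((Dvd.intro_left _ rfl).trans ((Dvd.intro _ rfl).trans h)),
        (hr _).1 ((Dvd.intro_left _ rfl).trans ((Dvd.intro _ rfl).trans ((Dvd.intro _ rfl).trans h)))⟩
    · rintro ⟨h1, h2⟩
      have h3 : evL n F (δ ^ q) c = 0 := by
        rw [← hq, evL_frob, h1, zero_pow (by omega)]
      have h4 : evL n F (δ⁻¹ ^ q) c = 0 := by
        rw [← hq, evL_frob, h2, zero_pow (by omega)]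
      have cp : ∀ {x y : E}, x ≠ y → IsCoprime (X - C x) (X - C y) := fun h =>
        isCoprime_X_sub_C_of_isUnit_sub (sub_ne_zero.2 h).isUnit
      refine IsCoprime.mul_dvd ?_ (IsCoprime.mul_dvd ?_ (IsCoprime.mul_dvd (cp r01) ?_ ?_) ?_) ?_
      · exact ((cp r03).mul_left (cp r13)).mul_left (cp r23)
      · exact (cp r02).mul_left (cp r12)
      all_goals rw [hr]; assumption
  have hroots : ∀ c ∈ Code, ∀ k, evL n F (![δ⁻¹ ^ q, δ⁻¹, δ, δ ^ q] k) c = 0 := by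
    intro c hc k
    obtain ⟨h1, h2⟩ := (hmem c).1 hc
    have h3 : evL n F (δ ^ q) c = 0 := by
      rw [← hq, evL_frob, h1, zero_pow (by omega)]
    have h4 : evL n F (δ⁻¹ ^ q) c = 0 := by
      rw [← hq, evL_frob, h2, zero_pow (by omega)]
    fin_cases k <;> first | exact h1 | exact h2 | exact h3 | exact h4
  have hrn : ∀ k, (![δ⁻¹ ^ q, δ⁻¹, δ, δ ^ q] k) ^ n = 1 := by
    have u : (δ ^ q) ^ n = 1 := by rw [← pow_mul, mul_comm, pow_mul, hδn, one_pow]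
    have v : (δ⁻¹ ^ q) ^ n = 1 := by rw [← pow_mul, mul_comm, pow_mul, hin, one_pow]
    intro k
    fin_cases k <;> first | exact hδn | exact hin | exact u | exact v
  have hwin : ∀ c ∈ Code, ∀ m : ZMod n, (∀ i, (∀ j : ℕ, j < 4 → i ≠ m + j) → c i = 0) → c = 0 := by
    intro c hc m hs
    have hz := four_roots (F := F) _ hinj (fun j : Fin 4 => c (m + ((j : ℕ) : ZMod n))) (by
      intro k
      have h := evL_window (hrn k) 4 (by omega) m c hs
      rw [hroots c hc k] at h
      refine (mul_eq_zero.1 h.symm).resolve_left (pow_ne_zero _ ?_)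
      intro h0
      have := hrn k
      rw [h0, zero_pow (by omega)] at this
      exact zero_ne_one this)
    funext i
    by_cases hi : ∀ j : ℕ, j < 4 → i ≠ m + j
    · exact hs i hi
    · push Not at hi
      obtain ⟨j, hj, rfl⟩ := hi
      exact congrFun hz ⟨j, hj⟩
  -- pair weight at least six
  have hmain : ∀ c ∈ Code, c ≠ 0 → ∀ P : Finset (ZMod n),
      (∀ i, i ∈ P ↔ (c i ≠ 0 ∨ c (i + 1) ≠ 0)) → 6 ≤ P.card := by
    intro c hc hc0 P hP
    by_contra hlt
    apply hc0
    obtain ⟨i0, hi0⟩ := Function.ne_iff.1 hc0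
    rcases support_cases hn7 (Finset.univ.filter fun i => c i ≠ 0) P (by simpa using hP)
      ⟨i0, by simpa using hi0⟩ (by omega) with ⟨m, hm⟩ | ⟨m, j, hj0, hj1, hm⟩
    · refine hwin c hc m fun i hi => ?_
      by_contra hne
      have := hm i (by simpa using hne)
      have a0 := hi 0 (by norm_num)
      have a1 := hi 1 (by norm_num)
      have a2 := hi 2 (by norm_num)
      have a3 := hi 3 (by norm_num)
      simp at a0 a1 a2 a3
      tauto
    · have hs : ∀ i, i ≠ m → i ≠ m + 1 → i ≠ j → c i = 0 := by
        intro i k1 k2 k3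
        by_contra hne
        have := hm i (by simpa using hne)
        tauto
      have h10 : (1 : ZMod n) ≠ 0 := by
        have : Fact (1 < n) := ⟨by omega⟩
        exact one_ne_zero
      have hmm : m ≠ m + 1 := by simpa using h10
      obtain ⟨e1, e2⟩ := (hmem c).1 hc
      rw [evL_three hδn m j hmm hj0 hj1 c hs] at e1
      rw [evL_three hin m j hmm hj0 hj1 c hs] at e2
      have e1' := (mul_eq_zero.1 e1).resolve_left (pow_ne_zero _ hδ0)
      have e2' := (mul_eq_zero.1 e2).resolve_left (pow_ne_zero _ (inv_ne_zero hδ0))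
      have tz : ∀ z : ZMod n, (δ ^ z.val) ^ 2 = 1 → z = 0 := by
        intro z hz
        rw [← pow_mul, hpow] at hz
        have := hcop2.dvd_of_dvd_mul_right hz
        have := Nat.eq_zero_of_dvd_of_lt this (ZMod.val_lt z)
        exact (ZMod.val_eq_zero z).1 this
      obtain ⟨z1, z2, z3⟩ := trinomial hδ0 hδF hF' (j - m).val
        (fun h => hj0 (sub_eq_zero.1 (tz _ h)))
        (fun h => by
          have e := pow_val_add hδn (j - m - 1) 1
          have e1 := pow_val_nat hδn 1
          rw [Nat.cast_one, pow_one] at e1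
          rw [e1, sub_add_cancel] at e
          rw [e, mul_pow] at h
          have h' : (δ ^ (j - m - 1).val) ^ 2 = 1 :=
            mul_right_cancel₀ (pow_ne_zero 2 hδ0) (h.trans (one_mul _).symm)
          have := tz _ h'
          exact hj1 (by linear_combination this)) _ _ _ e1' e2'
      funext i
      by_cases k1 : i = m
      · rw [k1]; exact z1
      by_cases k2 : i = m + 1
      · rw [k2]; exact z2
      by_cases k3 : i = j
      · rw [k3]; exact z3
      exact hs i k1 k2 k3
  -- linear algebra
  let φ : (ZMod n → F) →ₗ[F] E × E := (evL n F δ).prod (evL n F δ⁻¹)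
  have hker : ∀ c, c ∈ LinearMap.ker φ ↔ c ∈ Code := by
    intro c
    rw [hmem, LinearMap.mem_ker]
    simp [φ]
  have hfinE : Module.finrank F E = 2 := by
    have := Module.card_eq_pow_finrank (K := F) (V := E)
    rw [hE, hq] at this
    exact (Nat.pow_right_injective hq1 this).symm
  have hfinEE : Module.finrank F (E × E) = 4 := by
    rw [Module.finrank_prod, hfinE]
  let ψ : (k : ℕ) → (Fin k → F) →ₗ[F] (ZMod n → F) := fun k =>
    { toFun := fun a i => if h : i.val < k then a ⟨i.val, h⟩ else 0
      map_add' := fun a b => by funext i; by_cases h : i.val < k <;> simp [h]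
      map_smul' := fun r a => by funext i; by_cases h : i.val < k <;> simp [h] }
  have hψ : ∀ k a (i : ZMod n), ψ k a i = if h : i.val < k then a ⟨i.val, h⟩ else 0 :=
    fun k a i => rfl
  have hψinj : ∀ k ≤ n, ∀ a, ψ k a = 0 → a = 0 := by
    intro k hk a ha
    funext j
    have := congrFun ha ((j : ℕ) : ZMod n)
    rw [hψ] at this
    have hv : ((j : ℕ) : ZMod n).val = j := ZMod.val_natCast_of_lt (by omega)
    simpa [hv] using this
  have hψs : ∀ k a (i : ZMod n), (∀ j : ℕ, j < k → i ≠ j) → ψ k a i = 0 := by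
    intro k a i hi
    rw [hψ, dif_neg]
    intro h
    exact hi _ h (by simp)
  have hsurj : Function.Surjective φ := by
    have hi : Function.Injective (φ ∘ₗ ψ 4) := by
      rw [← LinearMap.ker_eq_bot, LinearMap.ker_eq_bot']
      intro a ha
      refine hψinj 4 (by omega) a (hwin _ ((hker _).1 ha) 0 fun i hi => ?_)
      exact hψs 4 a i (by simpa using hi)
    have hs := (LinearMap.injective_iff_surjective_of_finrank_eq_finrank
      (by rw [hfinEE]; simp)).1 hi
    intro y
    obtain ⟨a, ha⟩ := hs y
    exact ⟨_, ha⟩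
  refine ⟨⟨?_, ?_⟩, ?_⟩
  · intro u hu v hv huv
    refine hmain (u - v) ?_ (sub_ne_zero.2 huv) _ ?_
    · rw [← hker] at hu hv ⊢
      exact Submodule.sub_mem _ hu hv
    · intro i
      simp only [Finset.mem_filter, Finset.mem_univ, true_and, ne_eq, Prod.mk.injEq,
        Pi.sub_apply, sub_eq_zero]
      tauto
  · have hb : LinearMap.ker (φ ∘ₗ ψ 5) ≠ ⊥ :=
      LinearMap.ker_ne_bot_of_finrank_lt (by rw [hfinEE]; simp)
    obtain ⟨a, ha, ha0⟩ := (Submodule.ne_bot_iff _).1 hb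
    have hc : ψ 5 a ∈ Code := (hker _).1 ha
    have hc0 : ψ 5 a ≠ 0 := fun h => ha0 (hψinj 5 (by omega) a h)
    refine ⟨ψ 5 a, hc, 0, (hker _).1 (Submodule.zero_mem _), hc0, le_antisymm ?_ ?_⟩
    · have hsub : (Finset.univ.filter fun i : ZMod n => (ψ 5 a i, ψ 5 a (i + 1)) ≠
          ((0 : ZMod n → F) i, (0 : ZMod n → F) (i + 1))) ⊆
          (Finset.range 6).image fun t : ℕ => (t : ZMod n) - 1 := by
        intro i hi
        have hi' : ψ 5 a i ≠ 0 ∨ ψ 5 a (i + 1) ≠ 0 := by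
          simp only [Finset.mem_filter, Finset.mem_univ, true_and, ne_eq, Prod.mk.injEq,
            Pi.zero_apply] at hi
          tauto
        rw [Finset.mem_image]
        rcases hi' with h | h
        · have : ∃ j : ℕ, j < 5 ∧ i = j := by
            by_contra! hcon
            exact h (hψs 5 a i hcon)
          obtain ⟨j, hj, rfl⟩ := this
          exact ⟨j + 1, by simp; omega, by push_cast; ring⟩
        · have : ∃ j : ℕ, j < 5 ∧ i + 1 = j := by
            by_contra! hcon
            exact h (hψs 5 a _ hcon)
          obtain ⟨j, hj, hj'⟩ := this
          exact ⟨j, by simp; omega, by rw [← hj']; ring⟩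
      exact (Finset.card_le_card hsub).trans (Finset.card_image_le.trans (by simp))
    · refine hmain _ hc hc0 _ ?_
      intro i
      simp only [Finset.mem_filter, Finset.mem_univ, true_and, ne_eq, Prod.mk.injEq,
        Pi.zero_apply]
      tauto
  · have hset : Code = (LinearMap.ker φ : Set (ZMod n → F)) := by
      ext c; exact (hker c).symm
    have h1 := LinearMap.finrank_range_add_finrank_ker φ
    rw [LinearMap.range_eq_top.2 hsurj, finrank_top, hfinEE, Module.finrank_fintype_fun_eq_card,
      ZMod.card] at h1
    rw [hset]
    have h2 := Module.natCard_eq_pow_finrank (K := F) (V := LinearMap.ker φ)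
    rw [Nat.card_eq_fintype_card (α := F), hq] at h2
    rw [show n - 4 = Module.finrank F (LinearMap.ker φ) by omega]
    exact h2
end

section
/- Let q be a prime power and n an odd integer with n | q²−1 and n > q+1. Let δ ∈ F_{q²} \ F_q have order n, with monic minimal polynomial x² − bx − c over F_q. For an integer i ≥ 2, define a₀(i) = Σ_{j=0}^{⌊(i−2)/2⌋} C(i−2−j, j) b^{i−2−2j} c^{j+1} and a₁(i) = Σ_{j=0}^{⌊(i−1)/2⌋} C(i−1−j, j) b^{i−1−2j} c^{j}. Let C ⊆ F_q[x]/(x^n − 1) be the cyclic code with generator polynomial g(x) = (x−δ^{−q})(x−δ^{−1})(x−1)(x−δ)(x−δ^q), and suppose its minimum Hamming distance equals 4. Then C is an (n,7)_q MDS symbol-pair code if and only if for every integer i with 3 ≤ i ≤ n−3, one of the following holds: (1) a₁(i) = 0; or, when a₁(i) ≠ 0: (2) if a₁(i) = 1, then a₀(i) ≠ −b or c = 1; (3) if a₀(i) = 0, then a₁(i) ≠ 1/c or b = 0; (4) if a₀(i) ≠ 0 and a₁(i) ≠ 1, then a₁(i)·c = 1 or (a₁(i)·b + a₀(i))/(a₁(i)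 − 1) ≠ (a₁(i)·c − 1)/a₀(i). -/
open Polynomial

namespace MDS14

/-- Fibonacci-like polynomial sum. -/
noncomputable def V {F : Type*} [Field F] (b c : F) (m : ℕ) : F :=
  ∑ j ∈ Finset.range (m + 1), ((m - j).choose j : F) * b ^ (m - 2 * j) * c ^ j

theorem V_eq {F : Type*} [Field F] (b c : F) (m : ℕ) :
    ∑ j ∈ Finset.range (m / 2 + 1), ((m - j).choose j : F) * b ^ (m - 2 * j) * c ^ j = V b c m := by
  unfold V
  apply Finset.sum_subset
  · intro j hj
    simp only [Finset.mem_range] at *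
    omega
  · intro j hj hj'
    simp only [Finset.mem_range] at *
    rw [Nat.choose_eq_zero_of_lt (by omega)]
    simp

theorem V_rec {F : Type*} [Field F] (b c : F) (m : ℕ) :
    V b c (m + 2) = b * V b c (m + 1) + c * V b c m := by
  unfold V
  rw [Finset.sum_range_succ' _ (m + 2), Finset.sum_range_succ _ (m + 1),
    Finset.sum_range_succ' _ (m + 1)]
  have h1 : ∀ k ∈ Finset.range (m + 1),
      ((m + 2 - (k + 1)).choose (k + 1) : F) * b ^ (m + 2 - 2 * (k + 1)) * c ^ (k + 1)
      = b * (((m + 1 - (k + 1)).choose (k + 1) : F) * b ^ (m + 1 - 2 * (k + 1)) * c ^ (k + 1))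
        + c * (((m - k).choose k : F) * b ^ (m - 2 * k) * c ^ k) := by
    intro k hk
    simp only [Finset.mem_range] at hk
    have e1 : m + 2 - (k + 1) = (m - k) + 1 := by omega
    have e2 : m + 1 - (k + 1) = m - k := by omega
    have e3 : m + 2 - 2 * (k + 1) = m - 2 * k := by omega
    rw [e1, e2, e3, Nat.choose_succ_succ]
    push_cast
    by_cases h : m - k < k + 1
    · rw [Nat.choose_eq_zero_of_lt h]
      push_cast
      ring
    · have e4 : m - 2 * k = (m + 1 - 2 * (k + 1)) + 1 := by omega
      rw [e4, pow_succ b]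
      ring
  rw [Finset.sum_congr rfl h1, Finset.sum_add_distrib, ← Finset.mul_sum, ← Finset.mul_sum]
  rw [Nat.choose_eq_zero_of_lt (show m + 2 - (m + 1 + 1) < m + 1 + 1 by omega)]
  simp
  ring

theorem pow_V {F E : Type*} [Field F] [Field E] [Algebra F E] (b c : F) (δ : E)
    (h : δ ^ 2 = algebraMap F E b * δ + algebraMap F E c) (m : ℕ) :
    δ ^ (m + 2) = algebraMap F E (c * V b c m) + algebraMap F E (V b c (m + 1)) * δ := by
  induction m with
  | zero =>
    have h0 : V b c 0 = 1 := by simp [V]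
    have h1 : V b c 1 = b := by simp [V, Finset.sum_range_succ]
    simp only [zero_add, h0, h1, mul_one, h]; ring
  | succ m ih =>
    rw [show m + 1 + 2 = (m + 2) + 1 by ring, pow_succ, ih, V_rec]
    simp only [map_add, map_mul]
    linear_combination (algebraMap F E (V b c (m + 1))) * h

theorem pow_aCoeff {F E : Type*} [Field F] [Field E] [Algebra F E] (b c : F) (δ : E)
    (h : δ ^ 2 = algebraMap F E b * δ + algebraMap F E c) (i : ℕ) (hi : 2 ≤ i) :
    δ ^ i = algebraMap F E (aCoeff0 b c i) + algebraMap F E (aCoeff1 b c i) * δ := by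
  obtain ⟨m, rfl⟩ := Nat.exists_eq_add_of_le hi
  rw [add_comm 2 m, pow_V b c δ h]
  have h0 : aCoeff0 b c (m + 2) = c * V b c m := by
    unfold aCoeff0
    rw [← V_eq, Finset.mul_sum, show m + 2 - 2 = m by omega]
    refine Finset.sum_congr rfl fun j _ => ?_
    ring
  have h1 : aCoeff1 b c (m + 2) = V b c (m + 1) := by
    unfold aCoeff1
    rw [← V_eq, show m + 2 - 1 = m + 1 by omega]
  rw [h0, h1]

/-- independence of 1, δ over F -/
theorem indep {F E : Type*} [Field F] [Field E] [Algebra F E] {δ : E}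
    (hδF : δ ∉ Set.range (algebraMap F E)) {x y : F}
    (h : algebraMap F E x + algebraMap F E y * δ = 0) : x = 0 ∧ y = 0 := by
  have hy : y = 0 := by
    by_contra hy
    apply hδF
    refine ⟨-x / y, ?_⟩
    have : algebraMap F E y ≠ 0 := by simpa using hy
    rw [map_div₀, map_neg]
    field_simp
    linear_combination -h
  subst hy
  simpa using h

/-- the determinant criterion versus the conditions of the theorem -/
theorem cond_iff {F E : Type*} [Field F] [Field E] [Algebra F E] {δ : E} {b c A B : F}
    (hδ0 : δ ≠ 0) 
    (h2 : δ ^ 2 = algebraMap F E b * δ + algebraMap F E c) (i : ℕ)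
    (hi : δ ^ i = algebraMap F E A + algebraMap F E B * δ)
    (n1 : δ ^ i ≠ 1) (n2 : δ ^ i ≠ -1) (n3 : δ ^ i ≠ δ) (n4 : δ ^ (i + 1) ≠ 1) :
    (B = 0 ∨ (B ≠ 0 ∧ (B = 1 → A ≠ -b ∨ c = 1) ∧ (A = 0 → B ≠ 1 / c ∨ b = 0) ∧
      (A ≠ 0 ∧ B ≠ 1 → B * c = 1 ∨ (B * b + A) / (B - 1) ≠ (B * c - 1) / A))) ↔
    (1 - B * c) * (1 - B) - A * (A + B * b) ≠ 0 := by
  have hkey : ¬ (B * c = 1 ∧ A + B * b = 0) := by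
    rintro ⟨h3, h4⟩
    apply n4
    rw [pow_succ, hi]
    have h3' := congrArg (algebraMap F E) h3
    have h4' := congrArg (algebraMap F E) h4
    simp only [map_mul, map_add, map_one, map_zero] at h3' h4'
    linear_combination algebraMap F E B * h2 + h3' + δ * h4'
  have hkey2 : ¬ (B = 1 ∧ A = 0) := by
    rintro ⟨rfl, rfl⟩
    apply n3
    rw [hi]; simp
  have hA : B = 0 → A ≠ 1 ∧ A ≠ -1 := by
    rintro rfl
    refine ⟨?_, ?_⟩
    · rintro rfl
      apply n1; rw [hi]; simp
    · rintro rfl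
      apply n2; rw [hi]; simp
  by_cases hB : B = 0
  · simp only [hB, true_or, true_iff]
    obtain ⟨h5, h6⟩ := hA hB
    intro h
    have : (1 - A) * (1 + A) = 0 := by linear_combination h
    rcases mul_eq_zero.mp this with h | h
    · exact h5 (by linear_combination -h)
    · exact h6 (by linear_combination h)
  simp only [hB, false_or, ne_eq, not_false_eq_true, true_and]
  have hc : c = 0 → δ = algebraMap F E b := by
    rintro rfl
    have : δ * δ = algebraMap F E b * δ := by simpa [sq] using h2
    exact mul_right_cancel₀ hδ0 this
  constructor
  · rintro ⟨c1, c2, c3⟩ hdet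
    by_cases hB1 : B = 1
    · subst hB1
      have hA0 : A ≠ 0 := fun h => hkey2 ⟨rfl, h⟩
      have hAb : A + b = 0 := by
        have : A * (A + b) = 0 := by linear_combination -hdet
        exact (mul_eq_zero.mp this).resolve_left hA0
      rcases c1 rfl with h | h
      · exact h (by linear_combination hAb)
      · exact hkey ⟨by rw [h, one_mul], by linear_combination hAb⟩
    · have hB1' : 1 - B ≠ 0 := fun h => hB1 (by linear_combination -h)
      have hB1'' : B - 1 ≠ 0 := fun h => hB1 (by linear_combination h)
      by_cases hA0 : A = 0
      · have hBc : 1 - B * c = 0 := by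
          rw [hA0] at hdet
          have : (1 - B * c) * (1 - B) = 0 := by linear_combination hdet
          exact (mul_eq_zero.mp this).resolve_right hB1'
        have hc0 : c ≠ 0 := by rintro rfl; simp at hBc
        rcases c2 hA0 with h | h
        · apply h; field_simp; linear_combination -hBc
        · exact hkey ⟨by linear_combination -hBc, by rw [hA0, h]; ring⟩
      · rcases c3 ⟨hA0, hB1⟩ with h | h
        · refine hkey ⟨h, ?_⟩
          have : A * (A + B * b) = 0 := by linear_combination -hdet - (1 - B) * h
          exact (mul_eq_zero.mp this).resolve_left hA0
        · apply h
          rw [div_eq_div_iff hB1'' hA0]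
          linear_combination -hdet
  · intro hdet
    refine ⟨?_, ?_, ?_⟩
    · rintro rfl
      left
      rintro rfl
      apply hdet; ring
    · rintro rfl
      by_cases hc0 : c = 0
      · left
        rw [hc0]; simpa using hB
      · left
        rintro rfl
        apply hdet
        field_simp
        ring
    · rintro ⟨hA0, hB1⟩
      right
      intro h
      have hB1'' : B - 1 ≠ 0 := fun h => hB1 (by linear_combination h)
      rw [div_eq_div_iff hB1'' hA0] at h
      apply hdet
      linear_combination -h

/-- 2+2 pattern algebra -/
theorem two_two {F E : Type*} [Field F] [Field E] [Algebra F E] {δ : E} {b c A B : F}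
    (hδ0 : δ ≠ 0) (hδF : δ ∉ Set.range (algebraMap F E))
    (h2 : δ ^ 2 = algebraMap F E b * δ + algebraMap F E c) (i : ℕ)
    (hi : δ ^ i = algebraMap F E A + algebraMap F E B * δ)
    (n0 : δ ≠ 1) (n1 : δ ^ i ≠ 1) {x y z w : F} (hx : x ≠ 0)
    (e1 : x + y + z + w = 0)
    (e2 : algebraMap F E x + algebraMap F E y * δ + algebraMap F E z * δ ^ i
      + algebraMap F E w * (δ ^ i * δ) = 0)
    (e3 : algebraMap F E x + algebraMap F E y * δ⁻¹ + algebraMap F E z * δ⁻¹ ^ i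
      + algebraMap F E w * (δ⁻¹ ^ i * δ⁻¹) = 0) :
    (1 - B * c) * (1 - B) - A * (A + B * b) = 0 := by
  have e3' : algebraMap F E w + algebraMap F E z * δ + algebraMap F E y * δ ^ i
      + algebraMap F E x * (δ ^ i * δ) = 0 := by
    have hp : δ ^ i ≠ 0 := pow_ne_zero _ hδ0
    rw [inv_pow] at e3
    field_simp at e3
    linear_combination e3
  have f1 := indep hδF (x := x + z * A + w * B * c) (y := y + z * B + w * (A + B * b)) (by
    simp only [map_add, map_mul]
    rw [hi] at e2
    linear_combination e2 - algebraMap F E w * algebraMap F E B * h2)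
  have f2 := indep hδF (x := w + y * A + x * B * c) (y := z + y * B + x * (A + B * b)) (by
    simp only [map_add, map_mul]
    rw [hi] at e3'
    linear_combination e3' - algebraMap F E x * algebraMap F E B * h2)
  obtain ⟨f1, g1⟩ := f1
  obtain ⟨f2, g2⟩ := f2
  have hd : x + w = 0 := by
    by_contra hd
    have k1 : 1 - A + B * c = 0 := by
      have : (x + w) * (1 - A + B * c) = 0 := by linear_combination f1 + f2 - A * e1
      exact (mul_eq_zero.mp this).resolve_left hd
    have k2 : -1 - B + A + B * b = 0 := by
      have : (x + w) * (-1 - B + A + B * b) = 0 := by linear_combination g1 + g2 - (1 + B) * e1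
      exact (mul_eq_zero.mp this).resolve_left hd
    have k1' := congrArg (algebraMap F E) k1
    have k2' := congrArg (algebraMap F E) k2
    simp only [map_mul, map_add, map_sub, map_neg, map_one, map_zero] at k1' k2'
    have : (δ - 1) * (δ ^ i - 1) = 0 := by
      rw [hi]
      linear_combination k1' + δ * k2' + algebraMap F E B * h2
    rcases mul_eq_zero.mp this with h | h
    · exact n0 (by linear_combination h)
    · exact n1 (by linear_combination h)
  have hw : w = -x := by linear_combination hd
  have hz : z = -y := by linear_combination e1 - hd
  subst hw hz
  have : x * ((1 - B * c) * (1 - B) - A * (A + B * b)) = 0 := by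
    linear_combination (1 - B) * f1 + A * g1
  exact (mul_eq_zero.mp this).resolve_left hx

/-- converse of the 2+2 pattern -/
theorem two_two_conv {F E : Type*} [Field F] [Field E] [Algebra F E] {δ : E} {b c A B : F}
    (hδ0 : δ ≠ 0)
    (h2 : δ ^ 2 = algebraMap F E b * δ + algebraMap F E c) (i : ℕ)
    (hi : δ ^ i = algebraMap F E A + algebraMap F E B * δ)
    (hdet : (1 - B * c) * (1 - B) - A * (A + B * b) = 0) :
    ∃ x y : F, (x ≠ 0 ∨ y ≠ 0) ∧
     (algebraMap F E x + algebraMap F E y * δ + algebraMap F E (-y) * δ ^ i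
      + algebraMap F E (-x) * (δ ^ i * δ) = 0) ∧
     (algebraMap F E x + algebraMap F E y * δ⁻¹ + algebraMap F E (-y) * δ⁻¹ ^ i
      + algebraMap F E (-x) * (δ⁻¹ ^ i * δ⁻¹) = 0) := by
  have key : ∃ x y : F, (x ≠ 0 ∨ y ≠ 0) ∧ x * (1 - B * c) = y * A ∧
      y * (1 - B) = x * (A + B * b) := by
    by_cases h1 : A = 0 ∧ 1 - B * c = 0
    · obtain ⟨hA, hB⟩ := h1
      by_cases h3 : 1 - B = 0 ∧ A + B * b = 0
      · exact ⟨1, 0, Or.inl one_ne_zero, by rw [hB]; ring, by rw [h3.2]; ring⟩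
      · refine ⟨1 - B, A + B * b, ?_, by linear_combination hdet, by ring⟩
        tauto
    · refine ⟨A, 1 - B * c, ?_, by ring, by linear_combination hdet⟩
      tauto
  obtain ⟨x, y, hxy, k1, k2⟩ := key
  have k1' := congrArg (algebraMap F E) k1
  have k2' := congrArg (algebraMap F E) k2
  simp only [map_mul, map_add, map_sub, map_one] at k1' k2'
  have e : (algebraMap F E x + algebraMap F E y * δ + algebraMap F E (-y) * δ ^ i
      + algebraMap F E (-x) * (δ ^ i * δ) = 0) := by
    rw [hi]
    simp only [map_neg]
    linear_combination k1' + δ * k2' - algebraMap F E x * algebraMap F E B * h2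
  refine ⟨x, y, hxy, e, ?_⟩
  have hp : δ ^ i ≠ 0 := pow_ne_zero _ hδ0
  simp only [map_neg] at e ⊢
  rw [inv_pow]
  field_simp
  linear_combination -e

/-- 3+1 pattern algebra -/
theorem three_one {F E : Type*} [Field F] [Field E] [Algebra F E] {δ θ : E}
    (hδ0 : δ ≠ 0) (hθ0 : θ ≠ 0) (ht : δ + δ⁻¹ ∉ Set.range (algebraMap F E)) 
    {x y z w : F} (hx : x ≠ 0) (hz : z ≠ 0) (hw : w ≠ 0)
    (e1 : x + y + z + w = 0)
    (e2 : algebraMap F E x * δ⁻¹ + algebraMap F E y + algebraMap F E z * δ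
      + algebraMap F E w * θ = 0)
    (e3 : algebraMap F E x * δ + algebraMap F E y + algebraMap F E z * δ⁻¹
      + algebraMap F E w * θ⁻¹ = 0) : False := by
  have e1' := congrArg (algebraMap F E) e1
  simp only [map_add, map_zero] at e1'
  have hw' : algebraMap F E w ≠ 0 := by simpa using hw
  have hx' : algebraMap F E x ≠ 0 := by simpa using hx
  have hz' : algebraMap F E z ≠ 0 := by simpa using hz
  generalize hX : algebraMap F E x = x' at *
  generalize hY : algebraMap F E y = y' at *
  generalize hZ : algebraMap F E z = z' at *
  generalize hW : algebraMap F E w = w' at *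
  have hi : δ * δ⁻¹ = 1 := mul_inv_cancel₀ hδ0
  have hj : θ * θ⁻¹ = 1 := mul_inv_cancel₀ hθ0
  generalize δ⁻¹ = ε at *
  generalize θ⁻¹ = η at *
  have hne : δ + ε - 2 ≠ 0 := by
    intro h
    exact ht ⟨2, by rw [map_ofNat]; linear_combination -h⟩
  -- P = w (θ - 1), Q = w (η - 1)
  have hP : w' * (θ - 1) = - (x' * (ε - 1)) - z' * (δ - 1) := by linear_combination e2 - e1'
  have hQ : w' * (η - 1) = - (x' * (δ - 1)) - z' * (ε - 1) := by linear_combination e3 - e1'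
  have hPQ : (w' * (θ - 1)) * (w' * (η - 1)) = - w' * (w' * (θ - 1) + w' * (η - 1)) := by
    linear_combination w' ^ 2 * hj
  rw [hP, hQ] at hPQ
  have h : (δ + ε - 2) * (w' * (x' + z') + (x' ^ 2 + z' ^ 2) - x' * z' * (δ + ε)) = 0 := by
    linear_combination -hPQ + (x' ^ 2 + z' ^ 2 - 2 * x' * z') * hi
  have h' := (mul_eq_zero.mp h).resolve_left hne
  apply ht
  refine ⟨(w * (x + z) + (x ^ 2 + z ^ 2)) / (x * z), ?_⟩
  simp only [map_div₀, map_mul, map_add, map_pow, hX, hZ, hW]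
  field_simp
  linear_combination h'

end MDS14

namespace MDS14

section comb
variable {n : ℕ} [NeZero n]

/-- A set with at most one arc start lies in a window of length its cardinality. -/
theorem window_of_start (S : Finset (ZMod n)) (a : ZMod n)
    (h : ∀ s ∈ S, s ≠ a → s - 1 ∈ S) : ∀ s ∈ S, (s - a).val < S.card := by
  intro s hs
  have key : ∀ j : ℕ, j ≤ (s - a).val → s - (j : ZMod n) ∈ S := by
    intro j
    induction j with
    | zero => intro _; simpa using hs
    | succ j ih =>
      intro hj
      have h1 := ih (by omega)
      have h2 : s - (j : ZMod n) ≠ a := by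
        intro h2
        have h3 : s - a = (j : ZMod n) := by rw [← h2]; ring
        rw [h3, ZMod.val_natCast] at hj
        have := Nat.mod_le j n
        omega
      have := h _ h1 h2
      push_cast
      rwa [← sub_sub]
  have hc : (Finset.range ((s - a).val + 1)).card ≤ S.card := by
    apply Finset.card_le_card_of_injOn (fun j : ℕ => s - (j : ZMod n))
    · intro j hj
      simp only [Finset.coe_range, Set.mem_Iio] at hj
      exact key j (by omega)
    · intro i hi j hj hij
      simp only [Finset.coe_range, Set.mem_Iio] at hi hj
      have h1 := ZMod.val_lt (s - a)
      have h2 : (i : ZMod n) = j := by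
        have := hij
        simpa using this
      have h3 := congrArg ZMod.val h2
      rwa [ZMod.val_natCast_of_lt (by omega), ZMod.val_natCast_of_lt (by omega)] at h3
  rw [Finset.card_range] at hc
  omega

theorem val_neg_one' (hn : 1 < n) : (-1 : ZMod n).val = n - 1 := by
  obtain ⟨m, rfl⟩ : ∃ m, n = m + 1 := ⟨n - 1, by omega⟩
  exact ZMod.val_neg_one m

set_option maxHeartbeats 1000000 in
/-- classification of the supports of small pair weight -/
theorem classify (hodd : Odd n) (hn : 7 ≤ n) (S : Finset (ZMod n)) (h4 : 4 ≤ S.card)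
    (h6 : (S ∪ S.image (fun s => s - 1)).card ≤ 6) :
    (∃ a, ∀ s ∈ S, (s - a).val < 5) ∨
    (∃ a d, S = {a, a + 1, a + 2, d} ∧ S.card = 4) ∨
    (∃ a d, S = {a, a + 1, d, d + 1} ∧ S.card = 4) := by
  set B := S.filter (fun s => s - 1 ∉ S) with hB
  have hcard : S.card + B.card ≤ 6 := by
    have h1 : Disjoint S (B.image (fun s => s - 1)) := by
      rw [Finset.disjoint_left]
      intro x hx hx'
      obtain ⟨y, hy, rfl⟩ := Finset.mem_image.mp hx'
      exact (Finset.mem_filter.mp hy).2 hx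
    have h2 : (B.image (fun s => s - 1)).card = B.card :=
      Finset.card_image_of_injective _ (sub_left_injective)
    rw [← h2, ← Finset.card_union_of_disjoint h1]
    refine le_trans (Finset.card_le_card ?_) h6
    apply Finset.union_subset_union (Finset.Subset.refl _)
    exact Finset.image_subset_image (Finset.filter_subset _ _)
  have hmem : ∀ s ∈ S, s ∉ B → s - 1 ∈ S := by
    intro s hs hs'
    by_contra h
    exact hs' (Finset.mem_filter.mpr ⟨hs, h⟩)
  have h20 : (2 : ZMod n) ≠ 0 := by
    intro h
    have h' : ((2 : ℕ) : ZMod n) = 0 := by exact_mod_cast h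
    rw [ZMod.natCast_eq_zero_iff] at h'
    have := Nat.le_of_dvd (by norm_num) h'
    omega
  have h10 : (1 : ZMod n) ≠ 0 := by
    intro h
    have h' : ((1 : ℕ) : ZMod n) = 0 := by exact_mod_cast h
    rw [ZMod.natCast_eq_zero_iff] at h'
    have := Nat.le_of_dvd (by norm_num) h'
    omega
  have hcases : B.card = 0 ∨ B.card = 1 ∨ B.card = 2 := by omega
  rcases hcases with h | h | h
  · exfalso
    rw [Finset.card_eq_zero] at h
    obtain ⟨s, hs⟩ : S.Nonempty := Finset.card_pos.mp (by omega)
    have h1 := hmem s hs (by simp [h])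
    have h2 := window_of_start S s (fun t ht _ => hmem t ht (by simp [h])) _ h1
    rw [show s - 1 - s = -1 by ring, val_neg_one' (by omega)] at h2
    omega
  · left
    obtain ⟨a, ha⟩ := Finset.card_eq_one.mp h
    refine ⟨a, fun s hs => ?_⟩
    have := window_of_start S a (fun t ht hne => hmem t ht (by simpa [ha] using hne)) s hs
    omega
  · right
    have hS4 : S.card = 4 := by omega
    obtain ⟨a, d, had, hab⟩ := Finset.card_eq_two.mp h
    have hBS : B ⊆ S := Finset.filter_subset _ _
    have hdiff : (S \ B).card = 2 := by
      rw [Finset.card_sdiff_of_subset hBS]; omega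
    obtain ⟨x, y, hxy, hxyS⟩ := Finset.card_eq_two.mp hdiff
    have hSe : S = {a, d, x, y} := by
      rw [← Finset.union_sdiff_of_subset hBS, hxyS, hab]
      ext t; simp; tauto
    have hx : x ∈ S \ B := by rw [hxyS]; simp
    have hy : y ∈ S \ B := by rw [hxyS]; simp
    rw [Finset.mem_sdiff] at hx hy
    have hx1 := hmem x hx.1 hx.2
    have hy1 := hmem y hy.1 hy.2
    rw [hSe] at hx1 hy1
    simp only [Finset.mem_insert, Finset.mem_singleton] at hx1 hy1
    have fix : ∀ {u v : ZMod n}, u - 1 = v → u = v + 1 := by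
      intro u v h; rw [← h]; ring
    rcases hx1 with h1 | h1 | h1 | h1 <;> rcases hy1 with h2 | h2 | h2 | h2 <;>
      have h1 := fix h1 <;> have h2 := fix h2
    · exact absurd (h1.trans h2.symm) hxy
    · right; refine ⟨a, d, ?_, hS4⟩
      rw [hSe, h1, h2]; ext t; simp; tauto
    · left; refine ⟨a, d, ?_, hS4⟩
      rw [hSe, h2, h1, show a + 1 + 1 = a + 2 by ring]; ext t; simp; tauto
    · exact absurd (by linear_combination -h2) h10
    · right; refine ⟨a, d, ?_, hS4⟩
      rw [hSe, h1, h2]; ext t; simp; tauto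
    · exact absurd (h1.trans h2.symm) hxy
    · left; refine ⟨d, a, ?_, hS4⟩
      rw [hSe, h2, h1, show d + 1 + 1 = d + 2 by ring]; ext t; simp; tauto
    · exact absurd (by linear_combination -h2) h10
    · exact absurd (by linear_combination -h1) h10
    · exact absurd (by linear_combination -h1) h10
    · exact absurd (by linear_combination -h1) h10
    · exact absurd (by linear_combination -h1) h10
    · left; refine ⟨a, d, ?_, hS4⟩
      rw [hSe, h1, h2, show a + 1 + 1 = a + 2 by ring]; ext t; simp; tauto
    · left; refine ⟨d, a, ?_, hS4⟩
      rw [hSe, h1, h2, show d + 1 + 1 = d + 2 by ring]; ext t; simp; tauto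
    · exact absurd (by linear_combination -h1 - h2) h20
    · exact absurd (by linear_combination -h2) h10

end comb

section ev
variable {n : ℕ} [NeZero n] {F E : Type*} [Field F] [Field E] [Algebra F E]

/-- evaluation at a root of unity, as a linear map -/
noncomputable def ev (ρ : E) : (ZMod n → F) →ₗ[F] E where
  toFun w := ∑ j : ZMod n, algebraMap F E (w j) * ρ ^ j.val
  map_add' u v := by simp [add_mul, Finset.sum_add_distrib]
  map_smul' r u := by simp [Algebra.smul_def, mul_assoc, Finset.mul_sum]

theorem ev_apply (ρ : E) (w : ZMod n → F) :
    ev ρ w = ∑ j : ZMod n, algebraMap F E (w j) * ρ ^ j.val := rfl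

theorem ev_eq_eval (ρ : E) (w : ZMod n → F) :
    ev ρ w = ((polyOf w).map (algebraMap F E)).eval ρ := by
  simp [ev_apply, polyOf, Polynomial.map_sum, Polynomial.eval_finsetSum]

theorem chi_add {ρ : E} (hρ : ρ ^ n = 1) (i j : ZMod n) :
    ρ ^ (i + j).val = ρ ^ i.val * ρ ^ j.val := by
  rw [ZMod.val_add, ← pow_add]
  exact (pow_eq_pow_mod _ hρ).symm

theorem chi_natCast {ρ : E} (hρ : ρ ^ n = 1) (k : ℕ) :
    ρ ^ ((k : ZMod n)).val = ρ ^ k := by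
  rw [ZMod.val_natCast]
  exact (pow_eq_pow_mod _ hρ).symm

theorem chi_one {ρ : E} (hρ : ρ ^ n = 1) :
    ρ ^ ((1 : ZMod n)).val = ρ := by
  simpa using chi_natCast hρ 1

theorem ev_single [DecidableEq F] (ρ : E) (j : ZMod n) (x : F) :
    ev ρ (Pi.single j x : ZMod n → F) = algebraMap F E x * ρ ^ j.val := by
  rw [ev_apply, Finset.sum_eq_single j]
  · simp
  · intro k _ hk; simp [Pi.single_eq_of_ne hk]
  · simp

theorem ev_shift {ρ : E} (hρ : ρ ^ n = 1) (w : ZMod n → F) (a : ZMod n) :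
    ev ρ w = ρ ^ a.val * ev ρ (fun j => w (a + j)) := by
  rw [ev_apply, ev_apply, ← Equiv.sum_comp (Equiv.addLeft a), Finset.mul_sum]
  refine Finset.sum_congr rfl fun j _ => ?_
  simp only [Equiv.coe_addLeft]
  rw [chi_add hρ]; ring

theorem ev_frob [Fintype F] [Fintype E] (ρ : E) (w : ZMod n → F) :
    ev (ρ ^ Fintype.card F) w = (ev ρ w) ^ Fintype.card F := by
  have := (map_sum (FiniteField.frobeniusAlgHom F E)
    (fun j : ZMod n => algebraMap F E (w j) * ρ ^ j.val) Finset.univ)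
  rw [FiniteField.coe_frobeniusAlgHom] at this
  rw [ev_apply, ev_apply]
  refine Eq.trans ?_ this.symm
  refine Finset.sum_congr rfl fun j _ => ?_
  simp only [mul_pow, ← map_pow, FiniteField.pow_card]
  rw [← pow_mul, ← pow_mul, mul_comm j.val]

theorem window_zero (w : ZMod n → F) (a : ZMod n) (R : Finset E) (hR : R.card = 5)
    (hρ : ∀ ρ ∈ R, ρ ^ n = 1) (hev : ∀ ρ ∈ R, ev ρ w = 0)
    (hw : ∀ s, w s ≠ 0 → (s - a).val < 5) : w = 0 := by
  set u : ZMod n → F := fun j => w (a + j) with hu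
  have hu5 : ∀ j, u j ≠ 0 → j.val < 5 := by
    intro j hj
    have := hw _ hj
    simpa using this
  have hev' : ∀ ρ ∈ R, ev ρ u = 0 := by
    intro ρ h
    have h1 := hev ρ h
    rw [ev_shift (hρ ρ h) w a] at h1
    refine (mul_eq_zero.mp h1).resolve_left (pow_ne_zero _ ?_)
    rintro rfl
    have := hρ 0 h
    rw [zero_pow (NeZero.ne n)] at this
    exact zero_ne_one this
  have hdeg : ((polyOf u).map (algebraMap F E)).natDegree < 5 := by
    refine lt_of_le_of_lt Polynomial.natDegree_map_le ?_
    refine lt_of_le_of_lt (Polynomial.natDegree_sum_le_of_forall_le (n := 4) _ _ ?_) (by norm_num)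
    intro j _
    by_cases h : u j = 0
    · simp [h]
    · refine (Polynomial.natDegree_C_mul_X_pow_le _ _).trans ?_
      have := hu5 j h
      omega
  have hz := Polynomial.eq_zero_of_natDegree_lt_card_of_eval_eq_zero' _ R
    (fun ρ h => (ev_eq_eval ρ u).symm.trans (hev' ρ h)) (by rw [hR]; exact hdeg)
  rw [Polynomial.map_eq_zero] at hz
  have hcoef : ∀ j : ZMod n, (polyOf u).coeff j.val = u j := by
    intro j
    rw [polyOf, Polynomial.finsetSum_coeff, Finset.sum_eq_single j]
    · simp
    · intro k _ hk
      rw [Polynomial.coeff_C_mul_X_pow, if_neg]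
      intro h
      exact hk (ZMod.val_injective n h.symm)
    · simp
  funext s
  have := hcoef (s - a)
  rw [hz] at this
  simpa [hu] using this.symm

end ev

end MDS14

namespace MDS14

/-- the five roots -/
theorem roots_ne {E : Type*} [Field E] {δ : E} {q n : ℕ} (hδ0 : δ ≠ 0) (hδ : orderOf δ = n)
    (hodd : Odd n) (hn : q + 1 < n) (hq : 2 ≤ q) :
    δ⁻¹ ^ q ≠ δ⁻¹ ∧ δ⁻¹ ^ q ≠ 1 ∧ δ⁻¹ ^ q ≠ δ ∧ δ⁻¹ ^ q ≠ δ ^ q ∧ δ⁻¹ ≠ 1 ∧ δ⁻¹ ≠ δ ∧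
      δ⁻¹ ≠ δ ^ q ∧ 1 ≠ δ ∧ 1 ≠ δ ^ q ∧ δ ≠ δ ^ q := by
  have hne : ∀ k, 0 < k → k < n → δ ^ k ≠ 1 := by
    intro k h0 h1 h
    have := Nat.le_of_dvd h0 (hδ ▸ orderOf_dvd_of_pow_eq_one h)
    omega
  have hqq : δ ^ q ≠ δ := by
    intro h
    apply hne (q - 1) (by omega) (by omega)
    apply mul_right_cancel₀ hδ0
    rw [← pow_succ, show q - 1 + 1 = q by omega, h, one_mul]
  have hq1 : δ ^ q * δ ≠ 1 := by
    rw [← pow_succ]; exact hne _ (by omega) hn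
  have hq0 := hne q (by omega) (by omega)
  have h1 : δ ≠ 1 := by simpa using hne 1 (by omega) (by omega)
  have h2 : δ * δ ≠ 1 := by
    rw [← sq]; exact hne 2 (by omega) (by omega)
  have h2q : δ ^ q * δ ^ q ≠ 1 := by
    intro h
    rw [← pow_add, ← two_mul] at h
    have hd : n ∣ 2 * q := hδ ▸ orderOf_dvd_of_pow_eq_one h
    have := Nat.le_of_dvd (by omega) ((Nat.Coprime.dvd_mul_left hodd.coprime_two_right).mp hd)
    omega
  have hqz : δ ^ q ≠ 0 := pow_ne_zero _ hδ0
  simp only [inv_pow]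
  refine ⟨fun h => hqq (inv_injective h), fun h => hq0 (inv_eq_one.mp h), ?_, ?_,
    fun h => h1 (inv_eq_one.mp h), ?_, ?_, h1.symm, hq0.symm, hqq.symm⟩
  · intro h; apply hq1; nth_rewrite 2 [← h]; exact mul_inv_cancel₀ hqz
  · intro h; apply h2q; nth_rewrite 1 [← h]; exact inv_mul_cancel₀ hqz
  · intro h; apply h2; nth_rewrite 1 [← h]; exact inv_mul_cancel₀ hδ0
  · intro h; apply hq1; rw [← h]; exact inv_mul_cancel₀ hδ0

theorem cop {E : Type*} [Field E] {a b : E} (h : a ≠ b) :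
    IsCoprime (X - Polynomial.C a) (X - Polynomial.C b) :=
  Polynomial.isCoprime_X_sub_C_of_isUnit_sub (sub_ne_zero_of_ne h).isUnit

theorem prod_dvd_iff {E : Type*} [Field E] {a b d e : E} (p : E[X])
    (h1 : a ≠ b) (h2 : a ≠ 1) (h3 : a ≠ d) (h4 : a ≠ e) (h5 : b ≠ 1) (h6 : b ≠ d) (h7 : b ≠ e)
    (h8 : 1 ≠ d) (h9 : 1 ≠ e) (h10 : d ≠ e) :
    ((X - Polynomial.C a) * (X - Polynomial.C b) * (X - 1) * (X - Polynomial.C d) *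
      (X - Polynomial.C e)) ∣ p ↔
    p.eval a = 0 ∧ p.eval b = 0 ∧ p.eval 1 = 0 ∧ p.eval d = 0 ∧ p.eval e = 0 := by
  have hone : (X - 1 : E[X]) = X - Polynomial.C 1 := by simp
  rw [hone]
  constructor
  · intro h
    have key : ∀ r : E, (X - Polynomial.C r) ∣ ((X - Polynomial.C a) * (X - Polynomial.C b) *
        (X - Polynomial.C 1) * (X - Polynomial.C d) * (X - Polynomial.C e)) → p.eval r = 0 := by
      intro r hr
      exact Polynomial.dvd_iff_isRoot.mp (hr.trans h)
    refine ⟨key _ ?_, key _ ?_, key _ ?_, key _ ?_, key _ ?_⟩ <;>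
      rw [Polynomial.dvd_iff_isRoot] <;> simp [Polynomial.IsRoot]
  · rintro ⟨k1, k2, k3, k4, k5⟩
    refine IsCoprime.mul_dvd ?_ (IsCoprime.mul_dvd ?_ (IsCoprime.mul_dvd ?_ (IsCoprime.mul_dvd ?_
      (Polynomial.dvd_iff_isRoot.mpr k1) (Polynomial.dvd_iff_isRoot.mpr k2))
      (Polynomial.dvd_iff_isRoot.mpr k3)) (Polynomial.dvd_iff_isRoot.mpr k4))
      (Polynomial.dvd_iff_isRoot.mpr k5)
    · exact (((cop h4).mul_left (cop h7)).mul_left (cop h9)).mul_left (cop h10)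
    · exact ((cop h3).mul_left (cop h6)).mul_left (cop h8)
    · exact (cop h2).mul_left (cop h5)
    · exact cop h1

theorem seven_le {q n : ℕ} (hodd : Odd n) (hdvd : n ∣ q ^ 2 - 1) (hn : q + 1 < n) (hq : 2 ≤ q) :
    7 ≤ n := by
  by_contra h
  have : q = 2 ∨ q = 3 ∨ q = 4 := by omega
  rcases this with rfl | rfl | rfl <;> (interval_cases n <;> revert hodd hdvd <;> decide)

section dim
variable {n : ℕ} [NeZero n] {F E : Type*} [Field F] [Field E] [Algebra F E]

/-- the syndrome map -/
noncomputable def syn (δ : E) : (ZMod n → F) →ₗ[F] F × E × E :=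
  LinearMap.prod (∑ j, LinearMap.proj j) (LinearMap.prod (ev δ) (ev δ⁻¹))

theorem syn_apply (δ : E) (w : ZMod n → F) : syn δ w = (∑ j, w j, ev δ w, ev δ⁻¹ w) := by
  simp [syn]

theorem ev_one (w : ZMod n → F) : ev (1 : E) w = algebraMap F E (∑ j, w j) := by
  simp [ev_apply]

/-- extension by zero -/
def ext0 (m : ℕ) : (Fin m → F) →ₗ[F] (ZMod n → F) where
  toFun v j := if h : j.val < m then v ⟨j.val, h⟩ else 0
  map_add' u v := by funext j; by_cases h : j.val < m <;> simp [h]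
  map_smul' r u := by funext j; by_cases h : j.val < m <;> simp [h]

theorem ext0_apply (m : ℕ) (v : Fin m → F) (j : ZMod n) :
    ext0 m v j = if h : j.val < m then v ⟨j.val, h⟩ else 0 := rfl

theorem ext0_inj (m : ℕ) (hm : m ≤ n) : Function.Injective (ext0 (n := n) (F := F) m) := by
  intro u v h
  funext k
  have := congrFun h ((k : ℕ) : ZMod n)
  have hk : ((k : ℕ) : ZMod n).val = k := ZMod.val_natCast_of_lt (by omega)
  simpa [ext0_apply, hk] using this

theorem dims [Fintype F] [Fintype E] (hE : Fintype.card E = Fintype.card F ^ 2) (hn : 7 ≤ n)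
    (δ : E)
    (hwin : ∀ w : ZMod n → F, syn δ w = 0 → (∀ j, w j ≠ 0 → j.val < 5) → w = 0) :
    Nat.card (LinearMap.ker (syn (n := n) (F := F) δ)) = Fintype.card F ^ (n - 5) ∧
    ∃ w : ZMod n → F, w ≠ 0 ∧ syn δ w = 0 ∧ ∀ j, w j ≠ 0 → j.val < 6 := by
  have h2 : Module.finrank F E = 2 := by
    have h := Module.card_eq_pow_finrank (K := F) (V := E)
    rw [hE] at h
    exact (Nat.pow_right_injective Fintype.one_lt_card h).symm
  have hfr : Module.finrank F (F × E × E) = 5 := by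
    rw [Module.finrank_prod, Module.finrank_prod, h2, Module.finrank_self]
  constructor
  · have hinj : Function.Injective ((syn (n := n) (F := F) δ).comp (ext0 5)) := by
      rw [← LinearMap.ker_eq_bot, LinearMap.ker_eq_bot']
      intro v hv
      apply ext0_inj (n := n) 5 (by omega)
      rw [map_zero]
      apply hwin _ hv
      intro j hj
      by_contra h
      exact hj (by simp [ext0_apply, h])
    have hsurj := (LinearMap.injective_iff_surjective_of_finrank_eq_finrank
      (by rw [hfr]; simp)).mp hinj
    have hs : Function.Surjective (syn (n := n) (F := F) δ) := by
      rw [LinearMap.coe_comp] at hsurj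
      exact hsurj.of_comp
    have h3 := (syn (n := n) (F := F) δ).finrank_range_add_finrank_ker
    rw [LinearMap.range_eq_top.mpr hs, finrank_top, hfr, Module.finrank_fintype_fun_eq_card,
      ZMod.card] at h3
    rw [Module.natCard_eq_pow_finrank (K := F), Nat.card_eq_fintype_card]
    congr 1
    omega
  · have h6 : LinearMap.ker ((syn (n := n) (F := F) δ).comp (ext0 6)) ≠ ⊥ :=
      LinearMap.ker_ne_bot_of_finrank_lt (by rw [hfr]; simp)
    obtain ⟨v, hv, hv0⟩ := (Submodule.ne_bot_iff _).mp h6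
    refine ⟨ext0 6 v, ?_, hv, ?_⟩
    · intro h
      apply hv0
      apply ext0_inj (n := n) 6 (by omega)
      rw [h, map_zero]
    · intro j hj
      by_contra h
      exact hj (by simp [ext0_apply, h])

end dim

section pd
variable {n : ℕ} [NeZero n] {F : Type*} [Field F] [DecidableEq F]

theorem pairDist_sub (u v : ZMod n → F) : pairDist u v = pairDist (u - v) 0 := by
  unfold pairDist
  congr 1
  ext i
  simp [sub_eq_zero]

theorem pairDist_eq (w : ZMod n → F) :
    pairDist w 0 = (Finset.univ.filter (fun i => w i ≠ 0) ∪
      (Finset.univ.filter (fun i => w i ≠ 0)).image (fun s => s - 1)).card := by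
  unfold pairDist
  congr 1
  ext i
  simp only [Pi.zero_apply, ne_eq, Prod.mk.injEq, Finset.mem_filter, Finset.mem_univ, true_and,
    Finset.mem_union, Finset.mem_image]
  constructor
  · intro h
    by_cases h1 : w i = 0
    · right
      exact ⟨i + 1, fun h2 => h ⟨h1, h2⟩, by ring⟩
    · exact Or.inl h1
  · rintro (h | ⟨s, hs, rfl⟩) ⟨h1, h2⟩
    · exact h h1
    · exact hs (by simpa using h2)

theorem pairDist_le_seven (hn : 7 ≤ n) (w : ZMod n → F) (hw : ∀ j, w j ≠ 0 → j.val < 6) :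
    pairDist w 0 ≤ 7 := by
  unfold pairDist
  rw [← Finset.card_range 7]
  apply Finset.card_le_card_of_injOn (fun j : ZMod n => (j + 1).val)
  · intro j hj
    simp only [Finset.coe_filter, Finset.mem_univ, true_and, Set.mem_ofPred_eq, Pi.zero_apply, ne_eq,
      Prod.mk.injEq] at hj
    simp only [Finset.coe_range, Set.mem_Iio]
    by_cases h1 : w j = 0
    · have := hw (j + 1) (fun h => hj ⟨h1, h⟩)
      omega
    · have := hw j h1
      rw [ZMod.val_add]
      have h2 : (1 : ZMod n).val ≤ 1 := by
        have := ZMod.val_natCast n 1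
        rw [Nat.cast_one] at this
        rw [this]; exact Nat.mod_le _ _
      have := Nat.mod_le (j.val + (1 : ZMod n).val) n
      omega
  · intro i _ j _ hij
    simpa using ZMod.val_injective n hij

end pd

theorem four_sum {n : ℕ} [NeZero n] {F E : Type*} [Field F] [DecidableEq F] [Field E] [Algebra F E]
    (w : ZMod n → F) (a b c d : ZMod n) 
    (hS : Finset.univ.filter (fun i => w i ≠ 0) = {a, b, c, d})
    (h4 : (Finset.univ.filter (fun i => w i ≠ 0)).card = 4) (ρ : E) :
    ev ρ w = algebraMap F E (w a) * ρ ^ a.val + algebraMap F E (w b) * ρ ^ b.val +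
      algebraMap F E (w c) * ρ ^ c.val + algebraMap F E (w d) * ρ ^ d.val := by
  rw [hS] at h4
  have hd : c ≠ d ∧ b ∉ ({c, d} : Finset (ZMod n)) ∧ a ∉ ({b, c, d} : Finset (ZMod n)) := by
    refine ⟨?_, ?_, ?_⟩
    · rintro rfl
      have := Finset.card_le_three (a := a) (b := b) (c := c)
      simp at h4; omega
    · intro h
      rw [Finset.insert_eq_of_mem h] at h4
      have := Finset.card_le_three (a := a) (b := c) (c := d)
      omega
    · intro h
      rw [Finset.insert_eq_of_mem h] at h4
      have := Finset.card_le_three (a := b) (b := c) (c := d)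
      omega
  have : ev ρ w = ∑ j ∈ ({a, b, c, d} : Finset (ZMod n)), algebraMap F E (w j) * ρ ^ j.val := by
    rw [ev_apply]
    symm
    apply Finset.sum_subset (Finset.subset_univ _)
    intro j _ hj
    rw [← hS] at hj
    simp at hj
    simp [hj]
  rw [this, Finset.sum_insert hd.2.2, Finset.sum_insert hd.2.1, Finset.sum_pair hd.1]
  ring

end MDS14
/-- in the setting of the cyclic code with generator polynomial
`g(x) = (x−δ^{−q})(x−δ^{−1})(x−1)(x−δ)(x−δ^q)`, with `n` odd, `x² − bx − c` the monic
minimal polynomial of `δ` over `F_q`, and minimum Hamming distance `4`, the code is an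
`(n,7)_q` MDS symbol-pair code if and only if for every `3 ≤ i ≤ n−3` one of the following
holds: (1) `a₁(i) = 0`; or, when `a₁(i) ≠ 0`: (2) if `a₁(i) = 1`, then `a₀(i) ≠ −b` or
`c = 1`; (3) if `a₀(i) = 0`, then `a₁(i) ≠ 1/c` or `b = 0`; (4) if `a₀(i) ≠ 0` and
`a₁(i) ≠ 1`, then `a₁(i)c = 1` or `(a₁(i)b + a₀(i))/(a₁(i) − 1) ≠ (a₁(i)c − 1)/a₀(i)`. -/
theorem stmt14 {q n : ℕ} [NeZero n] {F E : Type*} [Field F] [Fintype F] [DecidableEq F]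
    [Field E] [Fintype E] [Algebra F E]
    (hq : Fintype.card F = q) (hE : Fintype.card E = q ^ 2)
    (hodd : Odd n) (hdvd : n ∣ q ^ 2 - 1) (hn : q + 1 < n)
    {δ : E} (hδ0 : δ ≠ 0) (hδF : δ ∉ Set.range (algebraMap F E)) (hδ : orderOf δ = n)
    {b c : F} (hmin : minpoly F δ = X ^ 2 - Polynomial.C b * X - Polynomial.C c)
    (Code : Set (ZMod n → F))
    (hCode : Code = {c' : ZMod n → F |
      ((X - Polynomial.C (δ⁻¹ ^ q)) * (X - Polynomial.C δ⁻¹) * (X - 1) *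
        (X - Polynomial.C δ) * (X - Polynomial.C (δ ^ q))) ∣
        (polyOf c').map (algebraMap F E)})
    (hd4 : (∀ c' ∈ Code, c' ≠ 0 → 4 ≤ hammingNorm c') ∧
      ∃ c' ∈ Code, c' ≠ 0 ∧ hammingNorm c' = 4) :
    (IsMinPairDist Code 7 ∧ Nat.card Code = q ^ (n - 7 + 2)) ↔
      ∀ i : ℕ, 3 ≤ i → i ≤ n - 3 →
        aCoeff1 b c i = 0 ∨
        (aCoeff1 b c i ≠ 0 ∧
          (aCoeff1 b c i = 1 → aCoeff0 b c i ≠ -b ∨ c = 1) ∧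
          (aCoeff0 b c i = 0 → aCoeff1 b c i ≠ 1 / c ∨ b = 0) ∧
          (aCoeff0 b c i ≠ 0 ∧ aCoeff1 b c i ≠ 1 →
            aCoeff1 b c i * c = 1 ∨
            (aCoeff1 b c i * b + aCoeff0 b c i) / (aCoeff1 b c i - 1) ≠
              (aCoeff1 b c i * c - 1) / aCoeff0 b c i)) := by
  have hq2 : 2 ≤ q := by
    rw [← hq]; exact Fintype.one_lt_card
  have hn7 := MDS14.seven_le hodd hdvd hn hq2
  have hδn : δ ^ n = 1 := by rw [← hδ]; exact pow_orderOf_eq_one δ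
  have hδin : δ⁻¹ ^ n = 1 := by rw [inv_pow, hδn, inv_one]
  have hne : ∀ k, 0 < k → k < n → δ ^ k ≠ 1 := by
    intro k h0 h1 h
    have := Nat.le_of_dvd h0 (hδ ▸ orderOf_dvd_of_pow_eq_one h)
    omega
  have h2 : δ ^ 2 = algebraMap F E b * δ + algebraMap F E c := by
    have h := minpoly.aeval F δ
    rw [hmin] at h
    simp only [map_sub, map_mul, map_pow, Polynomial.aeval_X, Polynomial.aeval_C] at h
    linear_combination h
  have hδ1 : δ ≠ 1 := by simpa using hne 1 (by omega) (by omega)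
  obtain ⟨r1, r2, r3, r4, r5, r6, r7, r8, r9, r10⟩ := MDS14.roots_ne hδ0 hδ hodd hn hq2
  -- `δ + δ⁻¹` is not in the base field
  have ht : δ + δ⁻¹ ∉ Set.range (algebraMap F E) := by
    rintro ⟨t, ht⟩
    have h3 : (δ + δ⁻¹) ^ q = δ + δ⁻¹ := by
      rw [← ht, ← map_pow, ← hq, FiniteField.pow_card]
    have h4 : (δ + δ⁻¹) ^ q = δ ^ q + δ⁻¹ ^ q := by
      have := map_add (FiniteField.frobeniusAlgHom F E) δ δ⁻¹
      rw [FiniteField.coe_frobeniusAlgHom, hq] at this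
      exact this
    have hqz : δ ^ q ≠ 0 := pow_ne_zero _ hδ0
    have h5 : (δ ^ q - δ) * (δ ^ q - δ⁻¹) = 0 := by
      have h6 := h4.symm.trans h3
      rw [inv_pow] at h6
      have h7 : δ ^ q * (δ ^ q)⁻¹ = 1 := mul_inv_cancel₀ hqz
      have h8 : δ * δ⁻¹ = 1 := mul_inv_cancel₀ hδ0
      linear_combination δ ^ q * h6 - h7 + h8
    rcases mul_eq_zero.mp h5 with h | h
    · exact r10 (sub_eq_zero.mp h).symm
    · exact r7 (sub_eq_zero.mp h).symm
  -- membership in the code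
  have hmem : ∀ w : ZMod n → F, w ∈ Code ↔ MDS14.syn δ w = 0 := by
    intro w
    rw [hCode, Set.mem_setOf_eq, MDS14.prod_dvd_iff _ r1 r2 r3 r4 r5 r6 r7 r8 r9 r10,
      ← MDS14.ev_eq_eval, ← MDS14.ev_eq_eval, ← MDS14.ev_eq_eval, ← MDS14.ev_eq_eval,
      ← MDS14.ev_eq_eval, MDS14.ev_one, MDS14.syn_apply, ← hq, MDS14.ev_frob, MDS14.ev_frob]
    simp only [Prod.mk_eq_zero, map_eq_zero]
    constructor
    · rintro ⟨-, k2, k3, k4, -⟩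
      exact ⟨k3, k4, k2⟩
    · rintro ⟨k3, k4, k2⟩
      have : Fintype.card F ≠ 0 := Fintype.card_ne_zero
      exact ⟨by rw [k2, zero_pow this], k2, k3, k4, by rw [k4, zero_pow this]⟩
  have hevs : ∀ w : ZMod n → F, MDS14.syn δ w = 0 →
      MDS14.ev (1 : E) w = 0 ∧ MDS14.ev δ w = 0 ∧ MDS14.ev δ⁻¹ w = 0 := by
    intro w hw
    rw [MDS14.syn_apply] at hw
    simp only [Prod.mk_eq_zero] at hw
    exact ⟨by rw [MDS14.ev_one, hw.1, map_zero], hw.2.1, hw.2.2⟩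
  -- window lemma
  have hwin : ∀ (w : ZMod n → F) (a : ZMod n), MDS14.syn δ w = 0 →
      (∀ s, w s ≠ 0 → (s - a).val < 5) → w = 0 := by
    classical
    intro w a hw hs
    obtain ⟨k1, k2, k3⟩ := hevs w hw
    have hc0 : Fintype.card F ≠ 0 := Fintype.card_ne_zero
    refine MDS14.window_zero w a ({δ⁻¹ ^ q, δ⁻¹, 1, δ, δ ^ q} : Finset E) ?_ ?_ ?_ hs
    · rw [Finset.card_insert_of_notMem, Finset.card_insert_of_notMem,
        Finset.card_insert_of_notMem, Finset.card_pair r10]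
      · simp [r8, r9]
      · simp only [Finset.mem_insert, Finset.mem_singleton, not_or]; exact ⟨r5, r6, r7⟩
      · simp only [Finset.mem_insert, Finset.mem_singleton, not_or]; exact ⟨r1, r2, r3, r4⟩
    · intro ρ hρ
      simp only [Finset.mem_insert, Finset.mem_singleton] at hρ
      rcases hρ with rfl | rfl | rfl | rfl | rfl
      · rw [pow_right_comm, hδin, one_pow]
      · exact hδin
      · exact one_pow _
      · exact hδn
      · rw [pow_right_comm, hδn, one_pow]
    · intro ρ hρ
      simp only [Finset.mem_insert, Finset.mem_singleton] at hρ
      rcases hρ with rfl | rfl | rfl | rfl | rfl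
      · rw [← hq, MDS14.ev_frob, k3, zero_pow hc0]
      · exact k3
      · exact k1
      · exact k2
      · rw [← hq, MDS14.ev_frob, k2, zero_pow hc0]
  obtain ⟨hcard, w7, hw70, hw7, hw7s⟩ := MDS14.dims (n := n) (F := F) (by rw [hE, hq]) hn7 δ
    (fun w hw hs => hwin w 0 hw (by simpa using hs))
  have hCcard : Nat.card Code = q ^ (n - 7 + 2) := by
    have : Code = (LinearMap.ker (MDS14.syn (n := n) (F := F) δ) : Set (ZMod n → F)) := by
      ext w
      rw [hmem]; rfl
    rw [this, show n - 7 + 2 = n - 5 by omega, ← hq]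
    exact hcard
  -- reformulation of the conditions
  have hcond : ∀ i : ℕ, 3 ≤ i → i ≤ n - 3 → (_ ↔ _) := fun i h3 hi =>
    MDS14.cond_iff (b := b) (c := c) (A := aCoeff0 b c i) (B := aCoeff1 b c i) hδ0 h2 i
      (MDS14.pow_aCoeff b c δ h2 i (by omega)) (hne i (by omega) (by omega))
      (by
        intro h
        have h' : δ ^ (2 * i) = 1 := by rw [mul_comm, pow_mul, h]; ring
        have hd : n ∣ 2 * i := hδ ▸ orderOf_dvd_of_pow_eq_one h'
        have := Nat.le_of_dvd (by omega) ((Nat.Coprime.dvd_mul_left hodd.coprime_two_right).mp hd)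
        omega)
      (by
        intro h
        apply hne (i - 1) (by omega) (by omega)
        apply mul_right_cancel₀ hδ0
        rw [← pow_succ, show i - 1 + 1 = i by omega, h, one_mul])
      (hne (i + 1) (by omega) (by omega))
  rw [and_iff_left hCcard]
  have hcast : ∀ k : ℕ, 0 < k → k < n → (k : ZMod n) ≠ 0 := by
    intro k h0 h1 h
    rw [ZMod.natCast_eq_zero_iff] at h
    have := Nat.le_of_dvd h0 h
    omega
  constructor
  · intro hmin7 i h3 hi
    rw [hcond i h3 hi]
    intro hdet
    obtain ⟨x, y, hxy, e1, e2⟩ := MDS14.two_two_conv hδ0 h2 i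
      (MDS14.pow_aCoeff b c δ h2 i (by omega)) hdet
    set w : ZMod n → F := Pi.single 0 x + Pi.single 1 y + Pi.single (i : ZMod n) (-y)
      + Pi.single ((i + 1 : ℕ) : ZMod n) (-x) with hw
    have hev : ∀ ρ : E, ρ ^ n = 1 → MDS14.ev ρ w = algebraMap F E x + algebraMap F E y * ρ
        + algebraMap F E (-y) * ρ ^ i + algebraMap F E (-x) * (ρ ^ i * ρ) := by
      intro ρ hρ
      rw [hw, map_add, map_add, map_add, MDS14.ev_single, MDS14.ev_single, MDS14.ev_single,
        MDS14.ev_single, MDS14.chi_natCast hρ, MDS14.chi_natCast hρ, MDS14.chi_one hρ, pow_succ]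
      simp
    have hsyn : MDS14.syn δ w = 0 := by
      rw [MDS14.syn_apply, hev δ hδn, hev δ⁻¹ hδin, e1, e2]
      have h1 := hev 1 (one_pow _)
      rw [MDS14.ev_one] at h1
      have h1' : algebraMap F E (∑ j, w j) = 0 := by
        rw [h1]; simp
      have : ∑ j, w j = 0 := (map_eq_zero _).mp h1'
      rw [this]; rfl
    have c1 : (1 : ZMod n) ≠ 0 := by simpa using hcast 1 (by omega) (by omega)
    have c2 : (i : ZMod n) ≠ 0 := hcast i (by omega) (by omega)
    have c3 : ((i + 1 : ℕ) : ZMod n) ≠ 0 := hcast (i + 1) (by omega) (by omega)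
    have c4 : (i : ZMod n) ≠ 1 := by
      intro h
      apply hcast (i - 1) (by omega) (by omega)
      rw [Nat.cast_sub (by omega), h]; simp
    have c5 : ((i + 1 : ℕ) : ZMod n) ≠ 1 := by
      intro h
      apply c2
      push_cast at h
      linear_combination h
    have hw0 : w 0 = x := by
      simp only [hw, Pi.add_apply, Pi.single_eq_same, Pi.single_eq_of_ne c1.symm,
        Pi.single_eq_of_ne c2.symm, Pi.single_eq_of_ne c3.symm, add_zero]
    have hw1 : w 1 = y := by
      simp only [hw, Pi.add_apply, Pi.single_eq_same, Pi.single_eq_of_ne c1,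
        Pi.single_eq_of_ne c4.symm, Pi.single_eq_of_ne c5.symm, add_zero, zero_add]
    have hwne : w ≠ 0 := by
      intro h
      rw [h] at hw0 hw1
      rcases hxy with h | h
      · exact h hw0.symm
      · exact h hw1.symm
    have h7 := hmin7.1 w ((hmem w).mpr hsyn) 0 ((hmem 0).mpr (map_zero _)) hwne
    have h6 : pairDist w 0 ≤ 6 := by
      unfold pairDist
      refine le_trans (Finset.card_le_card (t := {-1, 0, 1, (i : ZMod n) - 1, (i : ZMod n),
        ((i + 1 : ℕ) : ZMod n)}) ?_) Finset.card_le_six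
      intro j hj
      have hsupp : ∀ k, w k ≠ 0 → k = 0 ∨ k = 1 ∨ k = (i : ZMod n) ∨
          k = ((i + 1 : ℕ) : ZMod n) := by
        intro k hk
        by_contra hcon
        push Not at hcon
        apply hk
        simp only [hw, Pi.add_apply, Pi.single_eq_of_ne hcon.1, Pi.single_eq_of_ne hcon.2.1,
          Pi.single_eq_of_ne hcon.2.2.1, Pi.single_eq_of_ne hcon.2.2.2, add_zero]
      simp only [Finset.mem_filter, Finset.mem_univ, true_and, Pi.zero_apply, ne_eq,
        Prod.mk.injEq] at hj
      simp only [Finset.mem_insert, Finset.mem_singleton]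
      by_cases hj0 : w j = 0
      · rcases hsupp (j + 1) (fun h => hj ⟨hj0, h⟩) with h | h | h | h
        · left; linear_combination h
        · right; left; linear_combination h
        · right; right; right; left; linear_combination h
        · right; right; right; right; left; push_cast at h; linear_combination h
      · rcases hsupp j hj0 with h | h | h | h <;> simp [h]
    omega
  · intro hall
    have hall' : ∀ i : ℕ, 3 ≤ i → i ≤ n - 3 → _ := fun i h3 hi => (hcond i h3 hi).mp (hall i h3 hi)
    have hlow : ∀ w : ZMod n → F, MDS14.syn δ w = 0 → w ≠ 0 → 7 ≤ pairDist w 0 := by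
      intro w hw hw0
      by_contra hlt
      have h4 := hd4.1 w ((hmem w).mpr hw) hw0
      rw [MDS14.pairDist_eq] at hlt
      have h4' : 4 ≤ (Finset.univ.filter (fun i => w i ≠ 0)).card := h4
      obtain ⟨k1, k2, k3⟩ := hevs w hw
      have hS := MDS14.classify hodd hn7 _ h4' (by omega)
      have hsm : ∀ s, w s ≠ 0 ↔ s ∈ Finset.univ.filter (fun i => w i ≠ 0) := by simp
      rcases hS with ⟨a, ha⟩ | ⟨a, d, hS, hc4⟩ | ⟨a, d, hS, hc4⟩
      · exact hw0 (hwin w a hw (fun s hs => ha s ((hsm s).mp hs)))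
      · have hsum := fun ρ : E => MDS14.four_sum w _ _ _ _ hS hc4 ρ
        have na : w a ≠ 0 := by rw [hsm, hS]; simp
        have na2 : w (a + 2) ≠ 0 := by rw [hsm, hS]; simp
        have nd : w d ≠ 0 := by rw [hsm, hS]; simp
        have fac : ∀ ρ : E, ρ ^ n = 1 → ρ ≠ 0 → MDS14.ev ρ w = 0 →
            algebraMap F E (w a) * ρ⁻¹ + algebraMap F E (w (a + 1)) + algebraMap F E (w (a + 2)) * ρ
              + algebraMap F E (w d) * ρ ^ (d - (a + 1)).val = 0 := by
          intro ρ hρ hρ0 h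
          rw [hsum ρ, show a + 2 = (a + 1) + 1 by ring, MDS14.chi_add hρ (a + 1) 1,
            show d = (a + 1) + (d - (a + 1)) by ring, MDS14.chi_add hρ (a + 1) (d - (a + 1)),
            MDS14.chi_add hρ a 1, MDS14.chi_one hρ] at h
          have hz : ρ ^ a.val * ρ ≠ 0 := mul_ne_zero (pow_ne_zero _ hρ0) hρ0
          apply (mul_eq_zero.mp (?_ : (ρ ^ a.val * ρ) * _ = 0)).resolve_left hz
          have hinv : ρ * ρ⁻¹ = 1 := mul_inv_cancel₀ hρ0
          rw [show (a + 1) + (d - (a + 1)) = d by ring, show (a + 1) + 1 = a + 2 by ring] at h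
          linear_combination h + algebraMap F E (w a) * ρ ^ a.val * hinv
        have g1 := fac δ hδn hδ0 k2
        have g2 := fac δ⁻¹ hδin (inv_ne_zero hδ0) k3
        have g3 := fac 1 (one_pow _) one_ne_zero k1
        rw [inv_inv, inv_pow] at g2
        simp only [inv_one, one_pow, mul_one, ← map_add, map_eq_zero] at g3
        exact MDS14.three_one hδ0 (pow_ne_zero _ hδ0) ht na na2 nd g3 g1 g2
      · have hsum := fun ρ : E => MDS14.four_sum w _ _ _ _ hS hc4 ρ
        have na : w a ≠ 0 := by rw [hsm, hS]; simp
        have hsupp : ∀ s, w s ≠ 0 → s = a ∨ s = a + 1 ∨ s = d ∨ s = d + 1 := by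
          intro s hs
          rw [hsm, hS] at hs
          simpa using hs
        set i := (d - a).val with hi
        have hilt : i < n := ZMod.val_lt _
        have hd : d = a + (i : ZMod n) := by
          rw [hi, ZMod.natCast_zmod_val]; ring
        have v1 : ∀ k : ℕ, k < n → (k : ZMod n).val = k := fun k hk => ZMod.val_natCast_of_lt hk
        by_cases hi2 : i < 3
        · apply hw0
          apply hwin w a hw
          intro s hs
          have : ∃ k : ℕ, k < 5 ∧ s - a = (k : ZMod n) := by
            rcases hsupp s hs with h | h | h | h
            · exact ⟨0, by omega, by rw [h]; simp⟩
            · exact ⟨1, by omega, by rw [h]; simp⟩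
            · exact ⟨i, by omega, by rw [h, hd]; ring⟩
            · exact ⟨i + 1, by omega, by rw [h, hd]; push_cast; ring⟩
          obtain ⟨k, hk, hk'⟩ := this
          rw [hk', v1 k (by omega)]
          exact hk
        by_cases hi3 : n - 3 < i
        · apply hw0
          apply hwin w d hw
          intro s hs
          have had : a = d + ((n - i : ℕ) : ZMod n) := by
            rw [Nat.cast_sub hilt.le, ZMod.natCast_self, hd]; ring
          have : ∃ k : ℕ, k < 5 ∧ s - d = (k : ZMod n) := by
            rcases hsupp s hs with h | h | h | h
            · exact ⟨n - i, by omega, by rw [h]; nth_rewrite 1 [had]; ring⟩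
            · exact ⟨n - i + 1, by omega, by
                rw [h]; nth_rewrite 1 [had]; push_cast; ring⟩
            · exact ⟨0, by omega, by rw [h]; simp⟩
            · exact ⟨1, by omega, by rw [h]; simp⟩
          obtain ⟨k, hk, hk'⟩ := this
          rw [hk', v1 k (by omega)]
          exact hk
        have fac : ∀ ρ : E, ρ ^ n = 1 → ρ ≠ 0 → MDS14.ev ρ w = 0 →
            algebraMap F E (w a) + algebraMap F E (w (a + 1)) * ρ + algebraMap F E (w d) * ρ ^ i
              + algebraMap F E (w (d + 1)) * (ρ ^ i * ρ) = 0 := by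
          intro ρ hρ hρ0 h
          have hdv : ρ ^ d.val = ρ ^ a.val * ρ ^ i := by
            rw [hi, ← MDS14.chi_add hρ]
            congr 2; ring
          rw [hsum ρ, MDS14.chi_add hρ d 1, MDS14.chi_add hρ a 1, MDS14.chi_one hρ, hdv] at h
          have hz : ρ ^ a.val ≠ 0 := pow_ne_zero _ hρ0
          apply (mul_eq_zero.mp (?_ : (ρ ^ a.val) * _ = 0)).resolve_left hz
          linear_combination h
        have g1 := fac δ hδn hδ0 k2
        have g2 := fac δ⁻¹ hδin (inv_ne_zero hδ0) k3
        have g3 := fac 1 (one_pow _) one_ne_zero k1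
        simp only [one_pow, mul_one, ← map_add, map_eq_zero] at g3
        exact hall' i (by omega) (by omega) (MDS14.two_two hδ0 hδF h2 i
          (MDS14.pow_aCoeff b c δ h2 i (by omega)) hδ1 (hne i (by omega) (by omega)) na g3 g1 g2)
    refine ⟨?_, w7, (hmem _).mpr hw7, 0, (hmem 0).mpr (map_zero _), hw70, ?_⟩
    · intro u hu v hv huv
      rw [MDS14.pairDist_sub]
      apply hlow
      · rw [map_sub, (hmem u).mp hu, (hmem v).mp hv, sub_zero]
      · exact sub_ne_zero_of_ne huv
    · exact le_antisymm (MDS14.pairDist_le_seven hn7 w7 hw7s) (hlow w7 hw7 hw70)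
end
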